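/- arXiv:2002.02128 — 3 statements merged into one kernel-verified Lean document; each statement's English description precedes it below -/
import Mathlib

section
/- Let R be a Noetherian domain, A an 𝔸ⁿ-fibration over R, and W = (W₁,…,W_m) an m-tuple residual variable of A over R, so that B := R[W] is a polynomial ring in m variables over R contained in A. Then the following are equivalent: (1) Ω_R(A) is a stably free A-module; (2) A is a stably polynomial algebra over B, i.e., there exist r, s ∈ ℕ and a B-algebra isomorphism A[Z₁,…,Z_r] ≅ B[T₁,…,T_s]. -/
open TensorProduct

noncomputable section

/-- The residue field `κ(P) = R_P / P R_P` of a commutative ring `R` at a prime ideal `P`. -/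
abbrev ResidueFieldAt (R : Type*) [CommRing R] (P : Ideal R) [P.IsPrime] : Type _ :=
  IsLocalRing.ResidueField (Localization.AtPrime P)

/-- `A ⊗_R κ(P)` is a polynomial ring in `n` variables over `B ⊗_R κ(P)`
for every prime ideal `P` of `R`. -/
def FibersPolynomialOver (R B A : Type*) [CommRing R] [CommRing B] [CommRing A]
    [Algebra R B] [Algebra R A] [Algebra B A] [IsScalarTower R B A] (n : ℕ) : Prop :=
  ∀ (P : Ideal R) (_ : P.IsPrime),
    letI : Algebra (ResidueFieldAt R P ⊗[R] B) (ResidueFieldAt R P ⊗[R] A) :=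
      (Algebra.TensorProduct.map (AlgHom.id R (ResidueFieldAt R P))
        (IsScalarTower.toAlgHom R B A)).toRingHom.toAlgebra
    Nonempty ((ResidueFieldAt R P ⊗[R] A) ≃ₐ[ResidueFieldAt R P ⊗[R] B]
      MvPolynomial (Fin n) (ResidueFieldAt R P ⊗[R] B))

/-- `A` is an `𝔸ⁿ`-fibration over `R`: a finitely generated flat `R`-algebra all of whose
fibres are polynomial rings in `n` variables. -/
def IsAffineFibration (R A : Type*) [CommRing R] [CommRing A] [Algebra R A] (n : ℕ) : Prop :=
  Algebra.FiniteType R A ∧ Module.Flat R A ∧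
  ∀ (P : Ideal R) (_ : P.IsPrime),
    Nonempty ((ResidueFieldAt R P ⊗[R] A) ≃ₐ[ResidueFieldAt R P]
      MvPolynomial (Fin n) (ResidueFieldAt R P))

/-- `W` is an `m`-tuple residual variable of the `𝔸ⁿ`-fibration `A` over `R`. -/
def IsResidualVariable (R A : Type*) [CommRing R] [CommRing A] [Algebra R A]
    (n m : ℕ) (W : Fin m → A) : Prop :=
  AlgebraicIndependent R W ∧
  FibersPolynomialOver R (Algebra.adjoin R (Set.range W)) A (n - m)

/-- A module `M` over `A` is stably free if `M ⊕ Aˢ ≅ Aᵗ` for some `s, t`. -/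
def IsStablyFree (A M : Type*) [CommRing A] [AddCommGroup M] [Module A M] : Prop :=
  ∃ s t : ℕ, Nonempty ((M × (Fin s → A)) ≃ₗ[A] (Fin t → A))

end


/-! ### Part 1 : surjective endomorphisms of Noetherian rings -/

theorem ringHom_injective_of_surjective {S : Type*} [CommRing S] [IsNoetherianRing S]
    (f : S →+* S) (hf : Function.Surjective f) : Function.Injective f := by
  have hmono : Monotone (fun n : ℕ => RingHom.ker (f ^ n)) := by
    refine monotone_nat_of_le_succ fun n x hx => ?_
    rw [RingHom.mem_ker] at hx ⊢
    rw [pow_succ', RingHom.mul_def, RingHom.comp_apply, hx, map_zero]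
  obtain ⟨n, hn⟩ := monotone_stabilizes_iff_noetherian.mpr
    (inferInstance : IsNoetherian S S) ⟨_, hmono⟩
  have hsurj : ∀ k : ℕ, Function.Surjective (f ^ k : S →+* S) := by
    intro k
    induction k with
    | zero => exact fun x => ⟨x, rfl⟩
    | succ k ih =>
      rw [pow_succ', RingHom.mul_def]
      exact hf.comp ih
  rw [injective_iff_map_eq_zero]
  intro x hx
  obtain ⟨y, rfl⟩ := hsurj n x
  have h1 : y ∈ RingHom.ker (f ^ (n + 1)) := by
    rw [RingHom.mem_ker, pow_succ', RingHom.mul_def, RingHom.comp_apply, hx]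
  have h2 := hn (n + 1) (Nat.le_succ n)
  simp only [OrderHom.coe_mk] at h2
  rw [← h2] at h1
  exact h1

theorem mvPoly_injective_of_surjective {C : Type*} [CommRing C] [IsNoetherianRing C]
    {σ τ : Type*} [Fintype σ] [Fintype τ] (hc : Fintype.card σ ≤ Fintype.card τ)
    (f : MvPolynomial σ C →ₐ[C] MvPolynomial τ C) (hf : Function.Surjective f) :
    Function.Injective f := by
  classical
  obtain ⟨i⟩ := Function.Embedding.nonempty_of_card_le hc
  let g : MvPolynomial τ C →ₐ[C] MvPolynomial σ C :=
    MvPolynomial.aeval (Function.extend i MvPolynomial.X 0)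
  have hg : Function.Surjective g := by
    intro p
    refine ⟨MvPolynomial.rename i p, ?_⟩
    simp only [g, MvPolynomial.aeval_rename]
    have : (Function.extend i (MvPolynomial.X : σ → MvPolynomial σ C) 0) ∘ i
        = MvPolynomial.X := by
      funext x
      simp [i.injective.extend_apply]
    rw [this]
    simp
  have hfg := ringHom_injective_of_surjective (f.comp g).toRingHom (hf.comp hg)
  intro x y hxy
  obtain ⟨x, rfl⟩ := hg x
  obtain ⟨y, rfl⟩ := hg y
  rw [hfg hxy]

/-- version modulo an element `t`. -/
theorem mvPoly_dvd_of_surjective {B : Type*} [CommRing B] [IsNoetherianRing B] (t : B)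
    {σ τ : Type*} [Fintype σ] [Fintype τ] (hc : Fintype.card σ ≤ Fintype.card τ)
    (f : MvPolynomial σ B →ₐ[B] MvPolynomial τ B)
    (hf : ∀ q, ∃ p, MvPolynomial.C t ∣ q - f p)
    (p : MvPolynomial σ B) (hp : MvPolynomial.C t ∣ f p) : MvPolynomial.C t ∣ p := by
  let π := Ideal.Quotient.mk (Ideal.span {t})
  have key : ∀ (υ : Type _) (q : MvPolynomial υ B),
      MvPolynomial.C t ∣ q ↔ MvPolynomial.map π q = 0 := by
    intro υ q
    rw [MvPolynomial.C_dvd_iff_dvd_coeff, MvPolynomial.ext_iff]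
    refine forall_congr' fun i => ?_
    rw [MvPolynomial.coeff_map, MvPolynomial.coeff_zero, Ideal.Quotient.eq_zero_iff_mem,
      Ideal.mem_span_singleton]
  have key' : ∀ (q : MvPolynomial τ B),
      MvPolynomial.C t ∣ q ↔ MvPolynomial.map π q = 0 := by
    intro q
    rw [MvPolynomial.C_dvd_iff_dvd_coeff, MvPolynomial.ext_iff]
    refine forall_congr' fun i => ?_
    rw [MvPolynomial.coeff_map, MvPolynomial.coeff_zero, Ideal.Quotient.eq_zero_iff_mem,
      Ideal.mem_span_singleton]
  let F : MvPolynomial σ (B ⧸ Ideal.span {t}) →ₐ[B ⧸ Ideal.span {t}]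
      MvPolynomial τ (B ⧸ Ideal.span {t}) :=
    MvPolynomial.aeval fun i => MvPolynomial.map π (f (MvPolynomial.X i))
  have hF : ∀ p, F (MvPolynomial.map π p) = MvPolynomial.map π (f p) := by
    intro p
    have : F.toRingHom.comp (MvPolynomial.map π) = (MvPolynomial.map π).comp f.toRingHom := by
      apply MvPolynomial.ringHom_ext
      · intro r
        have : f (MvPolynomial.C r) = MvPolynomial.C r := f.commutes r
        simp [F, this]
      · intro i
        simp [F]
    exact RingHom.congr_fun this p
  have hs : Function.Surjective F := by
    intro q
    obtain ⟨q, rfl⟩ := MvPolynomial.map_surjective π Ideal.Quotient.mk_surjective q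
    obtain ⟨p, hp⟩ := hf q
    rw [key', map_sub, sub_eq_zero] at hp
    exact ⟨MvPolynomial.map π p, by rw [hF, hp]⟩
  have hi := mvPoly_injective_of_surjective hc F hs
  rw [key]
  apply hi
  rw [hF, map_zero]
  exact (key' _).1 hp

/-! ### Part 2 : the extension lemma -/

/-- If `A` becomes the polynomial ring in `X` after inverting `t`, one can define algebra maps
out of `A` by giving the images of the `X i`, if the necessary divisions can be made. -/
theorem exists_algHom_of_localizedCoords {B A C : Type*} [CommRing B] [CommRing A] [CommRing C]
    [Algebra B A] [Algebra B C] (t : B)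
    (htC : ∀ c : C, t • c = 0 → c = 0) {σ : Type*}
    (X : σ → A) (hX : AlgebraicIndependent B X)
    (s : Set A) (hs : Algebra.adjoin B s = ⊤) (p : σ → C)
    (h : ∀ a ∈ s, ∃ (N : ℕ) (f : MvPolynomial σ B) (q : C),
      t ^ N • a = MvPolynomial.aeval X f ∧ MvPolynomial.aeval p f = t ^ N • q) :
    ∃ ψ : A →ₐ[B] C, ∀ i, ψ (X i) = p i := by
  have htC' : ∀ (n : ℕ) (c c' : C), t ^ n • c = t ^ n • c' → c = c' := by
    intro n c c' hcc
    rw [← sub_eq_zero] at hcc ⊢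
    rw [← smul_sub] at hcc
    generalize c - c' = d at hcc
    induction n with
    | zero => simpa using hcc
    | succ n ih =>
      apply ih
      apply htC
      rw [smul_smul, ← pow_succ', hcc]
  let Rel : A → C → Prop := fun a q => ∃ (N : ℕ) (f : MvPolynomial σ B),
      t ^ N • a = MvPolynomial.aeval X f ∧ MvPolynomial.aeval p f = t ^ N • q
  have radd : ∀ a b q r, Rel a q → Rel b r → Rel (a + b) (q + r) := by
    rintro a b q r ⟨N, f, h1, h2⟩ ⟨M, g, h3, h4⟩
    refine ⟨N + M, t ^ M • f + t ^ N • g, ?_, ?_⟩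
    · rw [map_add, map_smul, map_smul, ← h1, ← h3, smul_smul, smul_smul, smul_add, pow_add,
        mul_comm]
    · rw [map_add, map_smul, map_smul, h2, h4, smul_smul, smul_smul, smul_add, pow_add,
        mul_comm]
  have rmul : ∀ a b q r, Rel a q → Rel b r → Rel (a * b) (q * r) := by
    rintro a b q r ⟨N, f, h1, h2⟩ ⟨M, g, h3, h4⟩
    refine ⟨N + M, f * g, ?_, ?_⟩
    · rw [map_mul, ← h1, ← h3, smul_mul_smul_comm, pow_add]
    · rw [map_mul, h2, h4, smul_mul_smul_comm, pow_add]
  have ralg : ∀ b : B, Rel (algebraMap B A b) (algebraMap B C b) := by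
    intro b
    exact ⟨0, MvPolynomial.C b, by simp, by simp⟩
  have runiq : ∀ a q r, Rel a q → Rel a r → q = r := by
    rintro a q r ⟨N, f, h1, h2⟩ ⟨M, g, h3, h4⟩
    have e : t ^ M • f = t ^ N • g := by
      apply hX
      rw [map_smul, map_smul, ← h1, ← h3, smul_smul, smul_smul, mul_comm]
    apply htC' (M + N)
    rw [pow_add, mul_smul, ← h2, ← map_smul, e, map_smul, h4, smul_smul, mul_comm]
  have rex : ∀ a, ∃ q, Rel a q := by
    intro a
    have ha : a ∈ Algebra.adjoin B s := by rw [hs]; trivial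
    induction ha using Algebra.adjoin_induction with
    | mem x hx =>
      obtain ⟨N, f, q, h1, h2⟩ := h x hx
      exact ⟨q, N, f, h1, h2⟩
    | algebraMap r => exact ⟨_, ralg r⟩
    | add x y _ _ hx hy =>
      obtain ⟨q, hq⟩ := hx
      obtain ⟨r, hr⟩ := hy
      exact ⟨_, radd _ _ _ _ hq hr⟩
    | mul x y _ _ hx hy =>
      obtain ⟨q, hq⟩ := hx
      obtain ⟨r, hr⟩ := hy
      exact ⟨_, rmul _ _ _ _ hq hr⟩
  choose ψ hψ using rex
  refine ⟨{ toFun := ψ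
            map_one' := runiq 1 _ _ (hψ 1) (by simpa using ralg 1)
            map_mul' := fun a b => runiq _ _ _ (hψ _) (rmul _ _ _ _ (hψ a) (hψ b))
            map_zero' := runiq 0 _ _ (hψ 0) (by simpa using ralg 0)
            map_add' := fun a b => runiq _ _ _ (hψ _) (radd _ _ _ _ (hψ a) (hψ b))
            commutes' := fun b => runiq _ _ _ (hψ _) (ralg b) }, fun i => ?_⟩
  exact runiq _ _ _ (hψ _) ⟨0, MvPolynomial.X i, by simp, by simp⟩


theorem dvd_sub_of_adjoin {B A C : Type*} [CommRing B] [CommRing A] [CommRing C]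
    [Algebra B A] [Algebra B C] (f g : A →ₐ[B] C) (j : C) (s : Set A)
    (hs : Algebra.adjoin B s = ⊤) (h : ∀ a ∈ s, j ∣ f a - g a) (a : A) : j ∣ f a - g a := by
  have ha : a ∈ Algebra.adjoin B s := by rw [hs]; trivial
  induction ha using Algebra.adjoin_induction with
  | mem x hx => exact h x hx
  | algebraMap r => simp
  | add x y _ _ hx hy =>
    have : f (x + y) - g (x + y) = (f x - g x) + (f y - g y) := by
      rw [map_add, map_add]; ring
    rw [this]; exact dvd_add hx hy
  | mul x y _ _ hx hy =>
    have : f (x * y) - g (x * y) = f x * (f y - g y) + g y * (f x - g x) := by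
      rw [map_mul, map_mul]; ring
    rw [this]; exact dvd_add (Dvd.dvd.mul_left hy _) (Dvd.dvd.mul_left hx _)

section glue

variable {B A : Type*} [CommRing B] [CommRing A] [Algebra B A] (t : B)

theorem pow_surjective_mod {dy : ℕ} (Y : Fin dy → A)
    (hYs : ∀ a : A, ∃ p : MvPolynomial (Fin dy) B, algebraMap B A t ∣ a - MvPolynomial.aeval Y p)
    (k : ℕ) (a : A) :
    ∃ p : MvPolynomial (Fin dy) B, algebraMap B A t ^ k ∣ a - MvPolynomial.aeval Y p := by
  induction k with
  | zero => exact ⟨0, by simp⟩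
  | succ k ih =>
    obtain ⟨p, a', ha'⟩ := ih
    obtain ⟨q, b, hb⟩ := hYs a'
    refine ⟨p + MvPolynomial.C (t ^ k) * q, b, ?_⟩
    have : a' = MvPolynomial.aeval Y q + algebraMap B A t * b := by rw [← hb]; ring
    rw [this] at ha'
    simp only [map_add, map_mul, MvPolynomial.aeval_C, map_pow]
    linear_combination ha'

theorem pow_injective_mod (htA : ∀ a : A, t • a = 0 → a = 0) {dy : ℕ} (Y : Fin dy → A)
    (hYi : ∀ p : MvPolynomial (Fin dy) B, algebraMap B A t ∣ MvPolynomial.aeval Y p →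
      MvPolynomial.C t ∣ p)
    (k : ℕ) (p : MvPolynomial (Fin dy) B) (hp : algebraMap B A t ^ k ∣ MvPolynomial.aeval Y p) :
    MvPolynomial.C t ^ k ∣ p := by
  induction k generalizing p with
  | zero => simp
  | succ k ih =>
    obtain ⟨q, rfl⟩ := hYi p ((dvd_pow_self _ (Nat.succ_ne_zero k)).trans hp)
    rw [pow_succ']
    apply mul_dvd_mul_left
    apply ih
    obtain ⟨a, ha⟩ := hp
    refine ⟨a, ?_⟩
    rw [← sub_eq_zero]
    apply htA
    rw [Algebra.smul_def]
    rw [map_mul, MvPolynomial.aeval_C] at ha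
    linear_combination ha

theorem exists_gens [Algebra.FiniteType B A] {dx : ℕ} (X : Fin dx → A)
    (hXt : ∀ a : A, ∃ (N : ℕ) (f : MvPolynomial (Fin dx) B),
      t ^ N • a = MvPolynomial.aeval X f) :
    ∃ (s : Set A) (e : ℕ), Algebra.adjoin B s = ⊤ ∧ ∀ a ∈ s, ∃ (f : MvPolynomial (Fin dx) B),
      t ^ e • a = MvPolynomial.aeval X f := by
  obtain ⟨s, hs⟩ := Algebra.FiniteType.out (R := B) (A := A)
  choose N f hf using hXt
  refine ⟨s, s.sup N, hs, fun a ha => ⟨t ^ (s.sup N - N a) • f a, ?_⟩⟩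
  rw [map_smul, ← hf, smul_smul, ← pow_add, Nat.sub_add_cancel (Finset.le_sup ha)]

theorem smul_pow_cancel {M : Type*} [AddCommGroup M] [Module B M]
    (ht : ∀ a : M, t • a = 0 → a = 0) (n : ℕ) (a b : M) (h : t ^ n • a = t ^ n • b) : a = b := by
  rw [← sub_eq_zero] at h ⊢
  rw [← smul_sub] at h
  generalize a - b = d at h
  induction n with
  | zero => simpa using h
  | succ n ih =>
    apply ih
    apply ht
    rw [smul_smul, ← pow_succ', h]

theorem mvPoly_smul_cancel {σ : Type*} (htA : ∀ a : A, t • a = 0 → a = 0)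
    (p : MvPolynomial σ A) (h : t • p = 0) : p = 0 := by
  ext i
  apply htA
  have := congrArg (MvPolynomial.coeff i) h
  simpa using this

theorem exists_psi (htB : ∀ a : B, t • a = 0 → a = 0) (htA : ∀ a : A, t • a = 0 → a = 0)
    {dx dy : ℕ} (X : Fin dx → A) (hX : AlgebraicIndependent B X)
    (s : Set A) (e : ℕ) (hs : Algebra.adjoin B s = ⊤)
    (hse : ∀ a ∈ s, ∃ (f : MvPolynomial (Fin dx) B), t ^ e • a = MvPolynomial.aeval X f)
    (Y : Fin dy → A)
    (hYs : ∀ a : A, ∃ p : MvPolynomial (Fin dy) B, algebraMap B A t ∣ a - MvPolynomial.aeval Y p)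
    (hYi : ∀ p : MvPolynomial (Fin dy) B, algebraMap B A t ∣ MvPolynomial.aeval Y p →
      MvPolynomial.C t ∣ p) (k : ℕ) :
    ∃ ψ : A →ₐ[B] MvPolynomial (Fin dy) B,
      ∀ a, algebraMap B A t ^ k ∣ MvPolynomial.aeval Y (ψ a) - a := by
  have hp := fun i => pow_surjective_mod t Y hYs (k + e) (X i)
  choose p hp using hp
  have hev : ∀ f : MvPolynomial (Fin dx) B, algebraMap B A t ^ (k + e) ∣
      MvPolynomial.aeval X f - MvPolynomial.aeval Y (MvPolynomial.aeval p f) := by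
    intro f
    refine dvd_sub_of_adjoin (MvPolynomial.aeval X)
      ((MvPolynomial.aeval Y).comp (MvPolynomial.aeval p)) _ _
      (MvPolynomial.adjoin_range_X) ?_ f
    rintro _ ⟨i, rfl⟩
    simpa using hp i
  obtain ⟨ψ, hψ⟩ := exists_algHom_of_localizedCoords t
    (mvPoly_smul_cancel (σ := Fin dy) t htB) X hX s hs p (by
      intro a ha
      obtain ⟨f, hf⟩ := hse a ha
      have h1 : algebraMap B A t ^ e ∣ MvPolynomial.aeval Y (MvPolynomial.aeval p f) := by
        have h2 := (pow_dvd_pow (algebraMap B A t) (Nat.le_add_left e k)).trans (hev f)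
        rw [← hf, Algebra.smul_def, map_pow] at h2
        exact (dvd_sub_right (dvd_mul_right (algebraMap B A t ^ e) a)).1 h2
      obtain ⟨q, hq⟩ := pow_injective_mod t htA Y hYi e _ h1
      refine ⟨e, f, q, hf, ?_⟩
      rw [hq, MvPolynomial.smul_eq_C_mul, map_pow])
  refine ⟨ψ, fun a => ?_⟩
  have hψf : ∀ f : MvPolynomial (Fin dx) B, ψ (MvPolynomial.aeval X f) = MvPolynomial.aeval p f := by
    intro f
    have : ψ.comp (MvPolynomial.aeval X) = MvPolynomial.aeval p := by
      apply MvPolynomial.algHom_ext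
      intro i
      simp [hψ]
    exact DFunLike.congr_fun this f
  refine dvd_sub_of_adjoin ((MvPolynomial.aeval Y).comp ψ) (AlgHom.id B A) _ s hs ?_ a
  intro a ha
  obtain ⟨f, hf⟩ := hse a ha
  obtain ⟨c, hc⟩ := hev f
  refine ⟨-c, ?_⟩
  apply smul_pow_cancel t htA e
  have h3 : t ^ e • MvPolynomial.aeval Y (ψ a) = MvPolynomial.aeval Y (MvPolynomial.aeval p f) := by
    rw [← hψf, ← hf, map_smul, map_smul]
  simp only [AlgHom.comp_apply, AlgHom.id_apply]
  rw [smul_sub, h3, hf, Algebra.smul_def, map_pow]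
  rw [pow_add] at hc
  linear_combination - hc

theorem smul_kaehler_mem_span {dx : ℕ} (X : Fin dx → A)
    (s : Set A) (e : ℕ) (hs : Algebra.adjoin B s = ⊤)
    (hse : ∀ a ∈ s, ∃ (f : MvPolynomial (Fin dx) B), t ^ e • a = MvPolynomial.aeval X f)
    (ω : Ω[A⁄B]) :
    algebraMap B A t ^ e • ω ∈
      Submodule.span A (Set.range fun j => KaehlerDifferential.D B A (X j)) := by
  have hω : ω ∈ Submodule.span A (Set.range (KaehlerDifferential.D B A)) := by
    rw [KaehlerDifferential.span_range_derivation]; trivial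
  have key : ∀ f : MvPolynomial (Fin dx) B, KaehlerDifferential.D B A (MvPolynomial.aeval X f) ∈
      Submodule.span A (Set.range fun j => KaehlerDifferential.D B A (X j)) := by
    intro f
    induction f using MvPolynomial.induction_on with
    | C a => simp
    | add p q hp hq => rw [map_add, map_add]; exact add_mem hp hq
    | mul_X p n hp =>
      rw [map_mul, Derivation.leibniz, MvPolynomial.aeval_X]
      exact add_mem (Submodule.smul_mem _ _ (Submodule.subset_span ⟨n, rfl⟩))
        (Submodule.smul_mem _ _ hp)
  induction hω using Submodule.span_induction with
  | mem x hx =>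
    obtain ⟨a, rfl⟩ := hx
    have ha : a ∈ Algebra.adjoin B s := by rw [hs]; trivial
    induction ha using Algebra.adjoin_induction with
    | mem x hx =>
      obtain ⟨f, hf⟩ := hse x hx
      have h1 := key f
      rw [← hf, Derivation.map_smul, ← algebraMap_smul A (t ^ e), map_pow] at h1
      exact h1
    | algebraMap r => simp
    | add x y _ _ hx hy => rw [map_add, smul_add]; exact add_mem hx hy
    | mul x y _ _ hx hy =>
      rw [Derivation.leibniz, smul_add, smul_comm _ x, smul_comm _ y]
      exact add_mem (Submodule.smul_mem _ _ hy) (Submodule.smul_mem _ _ hx)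
  | zero => simp
  | add x y _ _ hx hy => rw [smul_add]; exact add_mem hx hy
  | smul a x _ hx => rw [smul_comm]; exact Submodule.smul_mem _ _ hx

theorem exists_derivation (htA : ∀ a : A, t • a = 0 → a = 0) {dx : ℕ} (X : Fin dx → A)
    (hX : AlgebraicIndependent B X)
    (s : Set A) (e : ℕ) (hs : Algebra.adjoin B s = ⊤)
    (hse : ∀ a ∈ s, ∃ (f : MvPolynomial (Fin dx) B), t ^ e • a = MvPolynomial.aeval X f)
    (j : Fin dx) :
    ∃ E : Derivation B A A, ∀ i, E (X i) = if i = j then algebraMap B A t ^ e else 0 := by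
  classical
  let p : Fin dx → TrivSqZeroExt A A := fun i =>
    TrivSqZeroExt.inl (X i) + TrivSqZeroExt.inr (if i = j then algebraMap B A t ^ e else 0)
  have hp : ∀ f : MvPolynomial (Fin dx) B, MvPolynomial.aeval p f =
      TrivSqZeroExt.inl (MvPolynomial.aeval X f) + TrivSqZeroExt.inr
        (algebraMap B A t ^ e * MvPolynomial.aeval X (MvPolynomial.pderiv j f)) := by
    intro f
    induction f using MvPolynomial.induction_on with
    | C a => simp; rfl
    | add p q hp hq => 
      rw [map_add, map_add, map_add, map_add, hp, hq]
      ext <;> simp; ring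
    | mul_X f n hf =>
      rw [map_mul, hf, MvPolynomial.aeval_X]
      ext
      · simp only [p, TrivSqZeroExt.fst_mul, TrivSqZeroExt.fst_add, TrivSqZeroExt.fst_inl,
          TrivSqZeroExt.fst_inr, map_mul, MvPolynomial.aeval_X, add_zero]
      · simp only [p, TrivSqZeroExt.snd_mul, TrivSqZeroExt.snd_add, TrivSqZeroExt.snd_inl,
          TrivSqZeroExt.snd_inr, TrivSqZeroExt.fst_add, TrivSqZeroExt.fst_inl,
          TrivSqZeroExt.fst_inr, map_mul, MvPolynomial.aeval_X, add_zero, zero_add,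
          op_smul_eq_smul, smul_eq_mul, Derivation.leibniz, map_add, MvPolynomial.pderiv_X,
          Pi.single_apply]
        by_cases hnj : n = j
        · subst hnj
          simp
          ring
        · simp [hnj]
          ring
  obtain ⟨ψ, hψ⟩ := exists_algHom_of_localizedCoords (C := TrivSqZeroExt A A) t
    (by
      intro c hc
      ext
      · exact htA _ (by simpa using congrArg TrivSqZeroExt.fst hc)
      · exact htA _ (by simpa using congrArg TrivSqZeroExt.snd hc)) X hX s hs p (by
      intro a ha
      obtain ⟨f, hf⟩ := hse a ha
      refine ⟨e, f, TrivSqZeroExt.inl a + TrivSqZeroExt.inr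
        (MvPolynomial.aeval X (MvPolynomial.pderiv j f)), hf, ?_⟩
      rw [hp, ← hf]
      ext
      · simp only [TrivSqZeroExt.fst_add, TrivSqZeroExt.fst_inl, TrivSqZeroExt.fst_smul,
          TrivSqZeroExt.fst_inr, add_zero]
      · simp only [TrivSqZeroExt.snd_add, TrivSqZeroExt.snd_inl, TrivSqZeroExt.snd_smul,
          TrivSqZeroExt.snd_inr, zero_add]
        rw [Algebra.smul_def, map_pow])
  have hψf : ∀ f : MvPolynomial (Fin dx) B, ψ (MvPolynomial.aeval X f) = MvPolynomial.aeval p f := by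
    intro f
    have : ψ.comp (MvPolynomial.aeval X) = MvPolynomial.aeval p := by
      apply MvPolynomial.algHom_ext
      intro i
      simp [hψ]
    exact DFunLike.congr_fun this f
  have hfst : ∀ a, (ψ a).fst = a := by
    intro a
    have : (TrivSqZeroExt.fstHom B A A).comp ψ = AlgHom.id B A := by
      refine AlgHom.ext_of_adjoin_eq_top hs ?_
      intro a ha
      obtain ⟨f, hf⟩ := hse a ha
      apply smul_pow_cancel t htA e
      rw [← map_smul, ← map_smul, hf]
      simp [hψf, hp]
    exact DFunLike.congr_fun this a
  refine ⟨Derivation.mk' ((TrivSqZeroExt.sndHom A A).restrictScalars B ∘ₗ ψ.toLinearMap) ?_, ?_⟩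
  · intro a b
    simp [hfst]
    ring
  · intro i
    show (ψ (X i)).snd = _
    rw [hψ]
    simp only [p, TrivSqZeroExt.snd_add, TrivSqZeroExt.snd_inl, TrivSqZeroExt.snd_inr, zero_add]
end glue


section glue

variable {B A : Type*} [CommRing B] [CommRing A] [Algebra B A] (t : B)

theorem D_aeval_mem_span {dx : ℕ} (X : Fin dx → A) (f : MvPolynomial (Fin dx) B) :
    KaehlerDifferential.D B A (MvPolynomial.aeval X f) ∈
      Submodule.span A (Set.range fun j => KaehlerDifferential.D B A (X j)) := by
  induction f using MvPolynomial.induction_on with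
  | C a => simp
  | add p q hp hq => rw [map_add, map_add]; exact add_mem hp hq
  | mul_X p n hp =>
    rw [map_mul, Derivation.leibniz, MvPolynomial.aeval_X]
    exact add_mem (Submodule.smul_mem _ _ (Submodule.subset_span ⟨n, rfl⟩))
      (Submodule.smul_mem _ _ hp)

/-- Comparison of the rank of `Ω` with the number of coordinates modulo `t`. -/
theorem rank_le_mod {dy c : ℕ} (hτ : ¬ IsUnit (algebraMap B A t)) (Y : Fin dy → A)
    (hYs : ∀ a : A, ∃ p : MvPolynomial (Fin dy) B, algebraMap B A t ∣ a - MvPolynomial.aeval Y p)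
    (b : Module.Basis (Fin c) A (Ω[A⁄B])) : c ≤ dy := by
  classical
  let I : Ideal A := Ideal.span {algebraMap B A t}
  have hI : I ≠ ⊤ := fun h => hτ (Ideal.span_singleton_eq_top.1 h)
  haveI : Nontrivial (A ⧸ I) := Ideal.Quotient.nontrivial_iff.2 hI
  let G : Ω[A⁄B] → (Fin c → A ⧸ I) := fun ω i => Ideal.Quotient.mk I (b.repr ω i)
  have Gadd : ∀ x y, G (x + y) = G x + G y := by
    intro x y; funext i; simp [G]
  have Gsmul : ∀ (a : A) x, G (a • x) = Ideal.Quotient.mk I a • G x := by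
    intro a x; funext i; simp [G]
  have Gzero : G 0 = 0 := by funext i; simp [G]
  let g : (Fin dy → A ⧸ I) →ₗ[A ⧸ I] (Fin c → A ⧸ I) :=
    Fintype.linearCombination (A ⧸ I) (fun j => G (KaehlerDifferential.D B A (Y j)))
  have h1 : ∀ ω ∈ Submodule.span A (Set.range fun j => KaehlerDifferential.D B A (Y j)),
      G ω ∈ LinearMap.range g := by
    intro ω hω
    induction hω using Submodule.span_induction with
    | mem x hx =>
      obtain ⟨j, rfl⟩ := hx
      exact ⟨Pi.single j 1, by simp [g, Fintype.linearCombination_apply_single]⟩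
    | zero => rw [Gzero]; exact zero_mem _
    | add x y _ _ hx hy => rw [Gadd]; exact add_mem hx hy
    | smul a x _ hx => rw [Gsmul]; exact Submodule.smul_mem _ _ hx
  have h2 : ∀ ω, G ω ∈ LinearMap.range g := by
    intro ω
    have hω : ω ∈ Submodule.span A (Set.range (KaehlerDifferential.D B A)) := by
      rw [KaehlerDifferential.span_range_derivation]; trivial
    induction hω using Submodule.span_induction with
    | mem x hx =>
      obtain ⟨a, rfl⟩ := hx
      obtain ⟨p, a', ha'⟩ := hYs a
      have : a = MvPolynomial.aeval Y p + t • a' := by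
        rw [Algebra.smul_def, ← ha']; ring
      rw [this, map_add, Derivation.map_smul, ← algebraMap_smul A t, Gadd, Gsmul]
      have h0 : Ideal.Quotient.mk I (algebraMap B A t) = 0 :=
        Ideal.Quotient.eq_zero_iff_mem.2 (Ideal.mem_span_singleton_self _)
      rw [h0, zero_smul, add_zero]
      exact h1 _ (D_aeval_mem_span Y p)
    | zero => rw [Gzero]; exact zero_mem _
    | add x y _ _ hx hy => rw [Gadd]; exact add_mem hx hy
    | smul a x _ hx => rw [Gsmul]; exact Submodule.smul_mem _ _ hx
  have hsurj : Function.Surjective g := by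
    intro v
    choose a ha using fun i => Ideal.Quotient.mk_surjective (v i)
    obtain ⟨w, hw⟩ := h2 (∑ i, a i • b i)
    refine ⟨w, ?_⟩
    rw [hw]
    funext i
    simp [G, ha, Finsupp.single_apply]
  have := card_le_of_surjective (A ⧸ I) g hsurj
  simpa using this

theorem exists_matrices (htA : ∀ a : A, t • a = 0 → a = 0) {dx c : ℕ} (X : Fin dx → A)
    (hX : AlgebraicIndependent B X)
    (s : Set A) (e : ℕ) (hs : Algebra.adjoin B s = ⊤)
    (hse : ∀ a ∈ s, ∃ (f : MvPolynomial (Fin dx) B), t ^ e • a = MvPolynomial.aeval X f)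
    (b : Module.Basis (Fin c) A (Ω[A⁄B])) :
    ∃ (L : Fin c → Fin dx → A) (M : Fin dx → Fin c → A),
      (∀ i, ∑ j, L i j • KaehlerDifferential.D B A (X j) = algebraMap B A t ^ e • b i) ∧
      (∀ l j, ∑ i, M l i * L i j = if l = j then algebraMap B A t ^ e else 0) ∧
      (Nontrivial A → c ≤ dx) := by
  classical
  have hL := fun i => (Submodule.mem_span_range_iff_exists_fun A).1
    (smul_kaehler_mem_span t X s e hs hse (b i))
  choose L hL using hL
  refine ⟨L, fun j i => b.repr (KaehlerDifferential.D B A (X j)) i, hL, ?_, ?_⟩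
  · intro l j
    obtain ⟨E, hE⟩ := exists_derivation t htA X hX s e hs hse j
    have h1 : ∑ j', (∑ i, b.repr (KaehlerDifferential.D B A (X l)) i * L i j') •
        KaehlerDifferential.D B A (X j') =
        algebraMap B A t ^ e • KaehlerDifferential.D B A (X l) := by
      simp_rw [Finset.sum_smul]
      rw [Finset.sum_comm]
      simp_rw [mul_smul, ← Finset.smul_sum, hL]
      simp_rw [smul_comm _ (algebraMap B A t ^ e), ← Finset.smul_sum]
      rw [b.sum_repr]
    have h2 := congrArg E.liftKaehlerDifferential h1
    rw [map_sum] at h2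
    simp only [map_smul, Derivation.liftKaehlerDifferential_comp_D, hE, smul_eq_mul,
      mul_ite, mul_zero, Finset.sum_ite_eq', Finset.mem_univ, if_true] at h2
    apply smul_pow_cancel t htA e
    rw [Algebra.smul_def, Algebra.smul_def, map_pow, mul_comm, h2]
    split_ifs <;> simp
  · intro _
    have LM : ∀ i i', ∑ j, L i j * b.repr (KaehlerDifferential.D B A (X j)) i' =
        if i = i' then algebraMap B A t ^ e else 0 := by
      intro i i'
      have h1 := congrArg (fun ω => b.repr ω i') (hL i)
      simpa [Finsupp.single_apply] using h1
    have hinj : Function.Injective (Fintype.linearCombination A L : (Fin c → A) →ₗ[A] _) := by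
      rw [← LinearMap.ker_eq_bot, LinearMap.ker_eq_bot']
      intro v hv
      funext i'
      apply smul_pow_cancel t htA e
      rw [Fintype.linearCombination_apply] at hv
      have h2 : ∀ j, ∑ i, v i * L i j = 0 := by
        intro j
        simpa using congrFun hv j
      have h3 : ∑ j, (∑ i, v i * L i j) * b.repr (KaehlerDifferential.D B A (X j)) i' = 0 := by
        simp [h2]
      simp_rw [Finset.sum_mul] at h3
      rw [Finset.sum_comm] at h3
      simp_rw [mul_assoc, ← Finset.mul_sum, LM] at h3
      rw [Algebra.smul_def, map_pow]
      simpa [mul_comm] using h3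
    simpa using card_le_of_injective A _ hinj

end glue


section glue

variable {B A : Type*} [CommRing B] [CommRing A] [Algebra B A] (t : B)

set_option maxHeartbeats 1000000 in
theorem exists_theta [Algebra.FiniteType B A]
    (htB : ∀ a : B, t • a = 0 → a = 0) (htA : ∀ a : A, t • a = 0 → a = 0)
    {dx dy c : ℕ} (X : Fin dx → A) (hX : AlgebraicIndependent B X)
    (hXt : ∀ a : A, ∃ (N : ℕ) (f : MvPolynomial (Fin dx) B), t ^ N • a = MvPolynomial.aeval X f)
    (Y : Fin dy → A)
    (hYs : ∀ a : A, ∃ p : MvPolynomial (Fin dy) B, algebraMap B A t ∣ a - MvPolynomial.aeval Y p)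
    (hYi : ∀ p : MvPolynomial (Fin dy) B, algebraMap B A t ∣ MvPolynomial.aeval Y p →
      MvPolynomial.C t ∣ p)
    (b : Module.Basis (Fin c) A (Ω[A⁄B])) :
    (Nontrivial A → c ≤ dx) ∧
    ∃ Θ : MvPolynomial (Fin dy ⊕ Fin c) B →ₐ[B] MvPolynomial (Fin dy) A,
      (∀ v, ∃ p, algebraMap B (MvPolynomial (Fin dy) A) t ∣ Θ p - v) ∧
      (∀ v, ∃ (N : ℕ) (p : _), algebraMap B (MvPolynomial (Fin dy) A) t ^ N * v = Θ p) := by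
  classical
  obtain ⟨s, e, hs, hse⟩ := exists_gens t X hXt
  obtain ⟨k, hk⟩ : ∃ k, k = e + 1 := ⟨_, rfl⟩
  obtain ⟨ψ, hψ⟩ := exists_psi t htB htA X hX s e hs hse Y hYs hYi k
  obtain ⟨L, M, hL, hML, hcdx⟩ := exists_matrices t htA X hX s e hs hse b
  refine ⟨hcdx, ?_⟩
  let V := MvPolynomial (Fin dy) A
  let T : V := algebraMap B V t
  let ι : A →ₐ[B] V := IsScalarTower.toAlgHom B A V
  have hιT : ι (algebraMap B A t) = T := ι.commutes t
  have hιC : ∀ a, ι a = MvPolynomial.C a := fun a => rfl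
  have hιs : ∀ (a : A) (v : V), a • v = ι a * v := fun a v => Algebra.smul_def a v
  have cancel : ∀ (n : ℕ) (v w : V), T ^ n * v = T ^ n * w → v = w := by
    intro n v w h
    apply smul_pow_cancel t (mvPoly_smul_cancel (σ := Fin dy) t htA) n
    rw [Algebra.smul_def, Algebra.smul_def, map_pow]
    exact h
  let Φ : MvPolynomial (Fin dy) B →ₐ[B] V :=
    MvPolynomial.aeval (fun j => ι (Y j) + T ^ k * MvPolynomial.X j)
  have hΦX : ∀ j, Φ (MvPolynomial.X j) = ι (Y j) + T ^ k * MvPolynomial.X j := by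
    intro j; simp [Φ]
  have hΦ : ∀ p, T ^ k ∣ Φ p - ι (MvPolynomial.aeval Y p) := by
    intro p
    refine dvd_sub_of_adjoin Φ (ι.comp (MvPolynomial.aeval Y)) _ _
      (MvPolynomial.adjoin_range_X) ?_ p
    rintro _ ⟨i, rfl⟩
    refine ⟨MvPolynomial.X i, ?_⟩
    rw [hΦX]; simp
  let χ : A →ₐ[B] V := Φ.comp ψ
  have hχ : ∀ a, ∃ v, ι a - χ a = T ^ k * v := by
    intro a
    have h1 := hΦ (ψ a)
    have h2 := map_dvd ι (hψ a)
    rw [map_pow, hιT, map_sub] at h2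
    have h3 := dvd_add h1 h2
    have h4 : ι a - χ a = - (Φ (ψ a) - ι (MvPolynomial.aeval Y (ψ a)) +
      (ι (MvPolynomial.aeval Y (ψ a)) - ι a)) := by
      simp only [χ, AlgHom.comp_apply]; ring
    rw [h4]
    exact (dvd_neg.2 h3)
  choose d hd using hχ
  have dadd : ∀ a a', d (a + a') = d a + d a' := by
    intro a a'
    apply cancel k
    rw [← hd, map_add, map_add, mul_add, ← hd, ← hd]; ring
  have dsmul : ∀ (r : B) a, d (r • a) = r • d a := by
    intro r a
    apply cancel k
    rw [← hd, map_smul, map_smul, mul_smul_comm, ← hd, smul_sub]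
  have dmul : ∀ a a', d (a * a') = ι a * d a' + χ a' * d a := by
    intro a a'
    apply cancel k
    rw [← hd, map_mul, map_mul]
    linear_combination (ι a) * hd a' + χ a' * hd a
  let J : Ideal V := Ideal.span {T ^ k}
  have hJ : ∀ v w : V, Ideal.Quotient.mk J v = Ideal.Quotient.mk J w ↔ T ^ k ∣ v - w := by
    intro v w
    rw [Ideal.Quotient.eq, Ideal.mem_span_singleton]
  have smk : ∀ (a : A) (v : V), a • (Ideal.Quotient.mk J v) = Ideal.Quotient.mk J (ι a * v) := by
    intro a v
    rw [← hιs]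
    rfl
  let δ : Derivation B A (V ⧸ J) := Derivation.mk'
    { toFun := fun a => Ideal.Quotient.mk J (d a)
      map_add' := fun a a' => by rw [dadd, map_add]
      map_smul' := fun r a => by rw [dsmul]; rfl } (by
      intro a a'
      simp only [LinearMap.coe_mk, AddHom.coe_mk]
      rw [smk, smk, dmul, ← map_add, hJ]
      refine ⟨- d a' * d a, ?_⟩
      linear_combination - d a * hd a')
  have hδ : ∀ a, δ a = Ideal.Quotient.mk J (d a) := fun a => rfl
  let ℓ := δ.liftKaehlerDifferential
  have hℓ : ∀ a, ℓ (KaehlerDifferential.D B A a) = Ideal.Quotient.mk J (d a) := by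
    intro a
    rw [← hδ]; exact Derivation.liftKaehlerDifferential_comp_D δ a
  choose z hz using fun i => Ideal.Quotient.mk_surjective (ℓ (b i))
  have hy : ∀ i, ∃ y, ∑ j, χ (L i j) * d (X j) = T ^ e * y ∧ T ∣ y - z i := by
    intro i
    have h1 := congrArg ℓ (hL i)
    rw [map_sum, map_smul, ← hz, smk] at h1
    simp only [map_smul, hℓ, smk] at h1
    rw [← map_sum, hJ, map_pow, hιT] at h1
    obtain ⟨w, hw⟩ := h1
    refine ⟨z i + T * (w - ∑ j, d (L i j) * d (X j)), ?_, ?_⟩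
    · have h2 : ∑ j, χ (L i j) * d (X j) =
          ∑ j, ι (L i j) * d (X j) - T ^ k * ∑ j, d (L i j) * d (X j) := by
        rw [Finset.mul_sum, ← Finset.sum_sub_distrib]
        refine Finset.sum_congr rfl fun j _ => ?_
        linear_combination - d (X j) * hd (L i j)
      rw [h2, hk]
      rw [hk] at hw
      linear_combination hw
    · exact ⟨_, add_sub_cancel_left _ _⟩
  choose y hy hyz using hy
  let Θ : MvPolynomial (Fin dy ⊕ Fin c) B →ₐ[B] V :=
    MvPolynomial.aeval (Sum.elim (fun j => Φ (MvPolynomial.X j)) y)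
  have hΘΦ : ∀ p, Θ (MvPolynomial.rename Sum.inl p) = Φ p := by
    intro p
    have : Θ.comp (MvPolynomial.rename Sum.inl) = Φ := by
      apply MvPolynomial.algHom_ext
      intro j
      simp [Θ]
    exact DFunLike.congr_fun this p
  have hΘy : ∀ i, Θ (MvPolynomial.X (Sum.inr i)) = y i := by
    intro i; simp [Θ]
  have hΘT : Θ (MvPolynomial.C t) = T := Θ.commutes t
  refine ⟨Θ, ?_, ?_⟩
  · let I : Ideal V := Ideal.span {T}
    let S : Subalgebra B V := Subalgebra.comap (Ideal.Quotient.mkₐ B I)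
      ((Ideal.Quotient.mkₐ B I).comp Θ).range
    have hS : ∀ v, v ∈ S ↔ ∃ p, T ∣ Θ p - v := by
      intro v
      rw [Subalgebra.mem_comap, AlgHom.mem_range]
      refine exists_congr fun p => ?_
      simp only [AlgHom.comp_apply, Ideal.Quotient.mkₐ_eq_mk]
      rw [Ideal.Quotient.eq, Ideal.mem_span_singleton]
    have hSabs : ∀ v w, v ∈ S → T ∣ v - w → w ∈ S := by
      intro v w hv hvw
      rw [hS] at hv ⊢
      obtain ⟨p, hp⟩ := hv
      refine ⟨p, ?_⟩
      have := dvd_add hp hvw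
      rwa [sub_add_sub_cancel] at this
    have hSΘ : ∀ p, Θ p ∈ S := fun p => (hS _).2 ⟨p, by simp⟩
    have hSΦ : ∀ p, Φ p ∈ S := fun p => by rw [← hΘΦ]; exact hSΘ _
    have hTk : T ∣ T ^ k := dvd_pow_self T (by omega)
    have hSι : ∀ a, ι a ∈ S := by
      intro a
      obtain ⟨p, hp⟩ := hYs a
      apply hSabs _ _ (hSΦ p)
      have h1 := hTk.trans (hΦ p)
      have h2 := map_dvd ι hp
      rw [hιT, map_sub] at h2
      have h3 := dvd_sub h1 h2
      rwa [sub_sub_sub_cancel_right] at h3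
      
    have hSz : ∀ i, z i ∈ S := fun i => hSabs _ _ (hΘy i ▸ hSΘ _) (hyz i)
    have hSd : ∀ a, d a ∈ S := by
      intro a
      have h1 := congrArg ℓ (b.sum_repr (KaehlerDifferential.D B A a))
      rw [map_sum, hℓ] at h1
      simp only [map_smul, ← hz, smk] at h1
      rw [← map_sum, hJ] at h1
      exact hSabs _ _ (sum_mem fun i _ => mul_mem (hSι _) (hSz i)) (hTk.trans h1)
    have hSX : ∀ j, (MvPolynomial.X j : V) ∈ S := by
      intro j
      obtain ⟨q, hq⟩ := pow_injective_mod t htA Y hYi k (ψ (Y j) - MvPolynomial.X j) (by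
        have := hψ (Y j)
        simpa using this)
      have h1 : MvPolynomial.X j = - d (Y j) - Φ q := by
        apply cancel k
        have h2 := hd (Y j)
        have h3 := congrArg Φ hq
        rw [map_sub, map_mul, map_pow, hΦX] at h3
        have h4 : Φ (MvPolynomial.C t) = T := Φ.commutes t
        rw [h4] at h3
        have h5 : χ (Y j) = Φ (ψ (Y j)) := rfl
        rw [h5] at h2
        linear_combination - h2 - h3
      rw [h1]
      exact sub_mem (neg_mem (hSd _)) (hSΦ _)
    intro v
    have : v ∈ S := by
      induction v using MvPolynomial.induction_on with
      | C a => exact hSι a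
      | add p q hp hq => exact add_mem hp hq
      | mul_X p n hp => exact mul_mem hp (hSX n)
    exact (hS v).1 this
  · have hdX : ∀ l, d (X l) ∈ Θ.range := by
      intro l
      have : d (X l) = ∑ i, χ (M l i) * y i := by
        apply cancel e
        rw [Finset.mul_sum]
        have h1 : ∀ i, T ^ e * (χ (M l i) * y i) = ∑ j, χ (M l i * L i j) * d (X j) := by
          intro i
          rw [mul_left_comm, ← hy, Finset.mul_sum]
          refine Finset.sum_congr rfl fun j _ => ?_
          rw [map_mul]; ring
        simp_rw [h1]
        rw [Finset.sum_comm]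
        simp_rw [← Finset.sum_mul, ← map_sum, hML]
        rw [Finset.sum_eq_single l]
        · have : χ (algebraMap B A t) = T := χ.commutes t
          rw [if_pos rfl, map_pow, this]
        · intro j _ hj
          rw [if_neg (Ne.symm hj), map_zero, zero_mul]
        · simp
      rw [this]
      exact sum_mem fun i _ => mul_mem ⟨_, hΘΦ _⟩ ⟨_, hΘy _⟩
    have hT : T ∈ Θ.range := ⟨_, hΘT⟩
    have hιX : ∀ l, ι (X l) ∈ Θ.range := by
      intro l
      have h1 : ι (X l) = χ (X l) + T ^ k * d (X l) := by rw [← hd]; ring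
      rw [h1]
      exact add_mem ⟨_, hΘΦ _⟩ (mul_mem (pow_mem hT _) (hdX l))
    have hιf : ∀ f : MvPolynomial (Fin dx) B, ι (MvPolynomial.aeval X f) ∈ Θ.range := by
      intro f
      induction f using MvPolynomial.induction_on with
      | C a =>
        rw [MvPolynomial.aeval_C, ι.commutes]
        exact Subalgebra.algebraMap_mem _ _
      | add p q hp hq => rw [map_add, map_add]; exact add_mem hp hq
      | mul_X p n hp => rw [map_mul, map_mul, MvPolynomial.aeval_X]; exact mul_mem hp (hιX n)
    have hιa : ∀ a, ∃ N : ℕ, T ^ N * ι a ∈ Θ.range := by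
      intro a
      obtain ⟨N, f, hf⟩ := hXt a
      refine ⟨N, ?_⟩
      have := hιf f
      rw [← hf, Algebra.smul_def, map_mul, map_pow, map_pow, hιT] at this
      exact this
    have hV : ∀ v : V, ∃ N : ℕ, T ^ N * v ∈ Θ.range := by
      intro v
      induction v using MvPolynomial.induction_on with
      | C a => exact hιa a
      | add p q hp hq =>
        obtain ⟨N, hN⟩ := hp
        obtain ⟨N', hN'⟩ := hq
        refine ⟨N + N', ?_⟩
        have : T ^ (N + N') * (p + q) = T ^ N' * (T ^ N * p) + T ^ N * (T ^ N' * q) := by ring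
        rw [this]
        exact add_mem (mul_mem (pow_mem hT _) hN) (mul_mem (pow_mem hT _) hN')
      | mul_X p n hp =>
        obtain ⟨N, hN⟩ := hp
        obtain ⟨N', hN'⟩ := hιa (Y n)
        refine ⟨N + (N' + k), ?_⟩
        have : T ^ (N + (N' + k)) * (p * MvPolynomial.X n) =
          (T ^ N * p) * (T ^ N' * Φ (MvPolynomial.X n) - T ^ N' * ι (Y n)) := by
          rw [hΦX]; ring
        rw [this]
        exact mul_mem hN (sub_mem (mul_mem (pow_mem hT _) ⟨_, hΘΦ _⟩) hN')
    intro v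
    obtain ⟨N, p, hp⟩ := hV v
    exact ⟨N, p, hp.symm⟩

end glue


section glue

variable {B A : Type*} [CommRing B] [CommRing A] [Algebra B A] (t : B)

theorem theta_inj_mod [IsNoetherianRing B] {dy c : ℕ} (hc : c ≤ dy) (Y : Fin dy → A)
    (hYs : ∀ a : A, ∃ p : MvPolynomial (Fin dy) B, algebraMap B A t ∣ a - MvPolynomial.aeval Y p)
    (hYi : ∀ p : MvPolynomial (Fin dy) B, algebraMap B A t ∣ MvPolynomial.aeval Y p →
      MvPolynomial.C t ∣ p)
    (Θ : MvPolynomial (Fin dy ⊕ Fin c) B →ₐ[B] MvPolynomial (Fin dy) A)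
    (hΘ : ∀ v, ∃ p, algebraMap B (MvPolynomial (Fin dy) A) t ∣ Θ p - v)
    (p : MvPolynomial (Fin dy ⊕ Fin c) B)
    (hp : algebraMap B (MvPolynomial (Fin dy) A) t ∣ Θ p) : MvPolynomial.C t ∣ p := by
  classical
  let V := MvPolynomial (Fin dy) A
  let T : V := algebraMap B V t
  have hTC : T = MvPolynomial.C (algebraMap B A t) := by
    exact MvPolynomial.algebraMap_apply t
  let κ : MvPolynomial (Fin dy ⊕ Fin dy) B →ₐ[B] V :=
    MvPolynomial.aeval (Sum.elim MvPolynomial.X (fun j => MvPolynomial.C (Y j)))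
  have hκ : ∀ q, κ q = MvPolynomial.map (MvPolynomial.aeval Y : _ →ₐ[B] A).toRingHom
      (MvPolynomial.sumAlgEquiv B (Fin dy) (Fin dy) q) := by
    intro q
    have : κ.toRingHom = (MvPolynomial.map (MvPolynomial.aeval Y : _ →ₐ[B] A).toRingHom).comp
      (MvPolynomial.sumAlgEquiv B (Fin dy) (Fin dy)).toAlgHom.toRingHom := by
      apply MvPolynomial.ringHom_ext
      · intro r
        simp [κ]
        rfl
      · rintro (i | i) <;> simp [κ]
    exact RingHom.congr_fun this q
  have κinj : ∀ q, T ∣ κ q → MvPolynomial.C t ∣ q := by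
    intro q hq
    rw [hκ, hTC, MvPolynomial.C_dvd_iff_dvd_coeff] at hq
    have h1 : MvPolynomial.C (MvPolynomial.C t) ∣
        MvPolynomial.sumAlgEquiv B (Fin dy) (Fin dy) q := by
      rw [MvPolynomial.C_dvd_iff_dvd_coeff]
      intro i
      apply hYi
      have := hq i
      rwa [MvPolynomial.coeff_map] at this
    have h2 := map_dvd (MvPolynomial.sumAlgEquiv B (Fin dy) (Fin dy)).symm h1
    rw [AlgEquiv.symm_apply_apply] at h2
    have h3 : (MvPolynomial.sumAlgEquiv B (Fin dy) (Fin dy)).symm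
      (MvPolynomial.C (MvPolynomial.C t)) = MvPolynomial.C t := by
      exact (MvPolynomial.sumAlgEquiv B (Fin dy) (Fin dy)).symm.commutes t
    rwa [h3] at h2
  have κsurj : ∀ v : V, ∃ q, T ∣ κ q - v := by
    intro v
    induction v using MvPolynomial.induction_on with
    | C a =>
      obtain ⟨q, a', ha⟩ := hYs a
      refine ⟨MvPolynomial.rename Sum.inr q, MvPolynomial.C (- a'), ?_⟩
      have h1 : κ (MvPolynomial.rename Sum.inr q) = MvPolynomial.C (MvPolynomial.aeval Y q) := by
        have : κ.comp (MvPolynomial.rename Sum.inr) =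
          (IsScalarTower.toAlgHom B A V).comp (MvPolynomial.aeval Y) := by
          apply MvPolynomial.algHom_ext
          intro j
          simp [κ]
          rfl
        exact DFunLike.congr_fun this q
      rw [h1, hTC, ← map_mul, ← map_sub]
      congr 1
      linear_combination - ha
    | add p q hp hq =>
      obtain ⟨p', hp'⟩ := hp
      obtain ⟨q', hq'⟩ := hq
      refine ⟨p' + q', ?_⟩
      have := dvd_add hp' hq'
      rw [map_add]
      rwa [add_sub_add_comm]
    | mul_X p n hp =>
      obtain ⟨p', hp'⟩ := hp
      refine ⟨p' * MvPolynomial.X (Sum.inl n), ?_⟩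
      have h1 : κ (MvPolynomial.X (Sum.inl n)) = MvPolynomial.X n := by simp [κ]
      rw [map_mul, h1, ← sub_mul]
      exact Dvd.dvd.mul_right hp' _
  choose u hu using fun g => κsurj (Θ (MvPolynomial.X g))
  let Ψ : MvPolynomial (Fin dy ⊕ Fin c) B →ₐ[B] MvPolynomial (Fin dy ⊕ Fin dy) B :=
    MvPolynomial.aeval u
  have hΨ : ∀ p, T ∣ κ (Ψ p) - Θ p := by
    intro p
    refine dvd_sub_of_adjoin (κ.comp Ψ) Θ _ _ (MvPolynomial.adjoin_range_X) ?_ p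
    rintro _ ⟨i, rfl⟩
    simpa [Ψ] using hu i
  refine mvPoly_dvd_of_surjective t (by simpa using hc) Ψ ?_ p ?_
  · intro q
    obtain ⟨p, hp⟩ := hΘ (κ q)
    refine ⟨p, ?_⟩
    apply κinj
    rw [map_sub, ← dvd_neg, neg_sub]
    have := dvd_add (hΨ p) hp
    rwa [sub_add_sub_cancel] at this
  · apply κinj
    exact (dvd_sub_left hp).1 (hΨ p)

theorem theta_inj [IsNoetherianRing B] {dx dy c : ℕ} (hc : c ≤ dx)
    (htB : ∀ a : B, t • a = 0 → a = 0)
    (X : Fin dx → A) (hX : AlgebraicIndependent B X)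
    (hXt : ∀ a : A, ∃ (N : ℕ) (f : MvPolynomial (Fin dx) B), t ^ N • a = MvPolynomial.aeval X f)
    (Θ : MvPolynomial (Fin dy ⊕ Fin c) B →ₐ[B] MvPolynomial (Fin dy) A)
    (hΘ : Function.Surjective Θ) : Function.Injective Θ := by
  classical
  let Bt := Localization.Away t
  have : IsNoetherianRing Bt := IsLocalization.isNoetherianRing (Submonoid.powers t) Bt inferInstance
  let C := MvPolynomial (Fin dx ⊕ Fin dy) Bt
  have hu : IsUnit (algebraMap B C t) := by
    rw [IsScalarTower.algebraMap_apply B Bt C]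
    exact (IsLocalization.Away.algebraMap_isUnit t).map _
  obtain ⟨ρ, hρ⟩ := exists_algHom_of_localizedCoords (C := C) t
    (by
      intro c hc
      rw [Algebra.smul_def] at hc
      exact (hu.mul_right_eq_zero).1 hc) X hX Set.univ (Algebra.adjoin_univ _ _)
      (fun i => MvPolynomial.X (Sum.inl i)) (by
      intro a _
      obtain ⟨N, f, hf⟩ := hXt a
      obtain ⟨q, hq⟩ := (hu.pow N).dvd (a := MvPolynomial.aeval
        (fun i => (MvPolynomial.X (Sum.inl i) : C)) f)
      refine ⟨N, f, q, hf, ?_⟩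
      rw [hq, Algebra.smul_def, map_pow])
  let ρV : MvPolynomial (Fin dy) A →ₐ[B] C :=
    MvPolynomial.aevalTower ρ (fun j => MvPolynomial.X (Sum.inr j))
  let Ψ : MvPolynomial (Fin dy ⊕ Fin c) Bt →ₐ[Bt] C :=
    MvPolynomial.aeval (fun g => ρV (Θ (MvPolynomial.X g)))
  have hΨ : ∀ p, Ψ (MvPolynomial.map (algebraMap B Bt) p) = ρV (Θ p) := by
    intro p
    have : (Ψ.restrictScalars B).toRingHom.comp (MvPolynomial.map (algebraMap B Bt)) =
      (ρV.comp Θ).toRingHom := by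
      apply MvPolynomial.ringHom_ext
      · intro r
        have h1 : Θ (MvPolynomial.C r) = algebraMap B _ r := Θ.commutes r
        simp [Ψ, h1]
        rfl
      · intro i
        simp [Ψ]
    exact RingHom.congr_fun this p
  have hr : ∀ v, ρV v ∈ Ψ.range := by
    intro v
    obtain ⟨p, rfl⟩ := hΘ v
    exact ⟨_, hΨ p⟩
  have hs : Function.Surjective Ψ := by
    rw [← AlgHom.range_eq_top, eq_top_iff, ← MvPolynomial.adjoin_range_X, Algebra.adjoin_le_iff]
    rintro _ ⟨i | j, rfl⟩
    · have := hr (MvPolynomial.C (X i))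
      simpa [ρV, hρ] using this
    · have := hr (MvPolynomial.X j)
      simpa [ρV] using this
  have hi := mvPoly_injective_of_surjective (by simp; omega) Ψ hs
  rw [injective_iff_map_eq_zero]
  intro p hp
  have h1 : Ψ (MvPolynomial.map (algebraMap B Bt) p) = 0 := by rw [hΨ, hp, map_zero]
  have h2 := hi (h1.trans (map_zero Ψ).symm)
  have h3 : Function.Injective (algebraMap B Bt) := by
    apply IsLocalization.injective (M := Submonoid.powers t)
    rw [Submonoid.powers_le, mem_nonZeroDivisors_iff_left]
    exact htB
  apply MvPolynomial.map_injective _ h3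
  rw [h2, map_zero]

theorem gluing [IsNoetherianRing B] [Algebra.FiniteType B A]
    (htB : ∀ a : B, t • a = 0 → a = 0) (htA : ∀ a : A, t • a = 0 → a = 0)
    {dx dy c : ℕ} (X : Fin dx → A) (hX : AlgebraicIndependent B X)
    (hXt : ∀ a : A, ∃ (N : ℕ) (f : MvPolynomial (Fin dx) B), t ^ N • a = MvPolynomial.aeval X f)
    (Y : Fin dy → A)
    (hYs : ∀ a : A, ∃ p : MvPolynomial (Fin dy) B, algebraMap B A t ∣ a - MvPolynomial.aeval Y p)
    (hYi : ∀ p : MvPolynomial (Fin dy) B, algebraMap B A t ∣ MvPolynomial.aeval Y p →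
      MvPolynomial.C t ∣ p)
    (b : Module.Basis (Fin c) A (Ω[A⁄B])) :
    ∃ Θ : MvPolynomial (Fin dy ⊕ Fin c) B →ₐ[B] MvPolynomial (Fin dy) A, Function.Bijective Θ := by
  obtain ⟨hcdx, Θ, hΘs, hΘN⟩ := exists_theta t htB htA X hX hXt Y hYs hYi b
  refine ⟨Θ, ?_⟩
  cases subsingleton_or_nontrivial A with
  | inl hA =>
    have : Subsingleton (MvPolynomial (Fin dx) B) := Function.Injective.subsingleton hX
    have : Subsingleton B := (MvPolynomial.C_injective (Fin dx) B).subsingleton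
    have : Subsingleton (MvPolynomial (Fin dy ⊕ Fin c) B) := inferInstance
    have : Subsingleton (MvPolynomial (Fin dy) A) := inferInstance
    exact ⟨Function.injective_of_subsingleton _, fun v => ⟨0, Subsingleton.elim _ _⟩⟩
  | inr hA =>
    have hinjmod : ∀ p, algebraMap B (MvPolynomial (Fin dy) A) t ∣ Θ p → MvPolynomial.C t ∣ p := by
      intro p hp
      by_cases ht : IsUnit t
      · exact (ht.map MvPolynomial.C).dvd
      · have hτ : ¬ IsUnit (algebraMap B A t) := by
          intro hu
          have h1 := hYi 1 hu.dvd
          have h2 := map_dvd (MvPolynomial.aeval (fun _ => (0 : B)) : _ →ₐ[B] B) h1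
          simp only [MvPolynomial.aeval_C, map_one, Algebra.algebraMap_self, RingHom.id_apply] at h2
          exact ht (isUnit_of_dvd_one h2)
        exact theta_inj_mod t (rank_le_mod t hτ Y hYs b) Y hYs hYi Θ hΘs p hp
    have hsurj : Function.Surjective Θ := by
      intro v
      obtain ⟨N, p, hp⟩ := hΘN v
      induction N generalizing p with
      | zero => exact ⟨p, by rw [← hp]; simp⟩
      | succ N ih =>
        obtain ⟨q, rfl⟩ := hinjmod p ⟨_, by rw [← hp, pow_succ', mul_assoc]⟩
        apply ih q
        apply smul_pow_cancel t (mvPoly_smul_cancel (σ := Fin dy) t htA) 1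
        have h1 : Θ (MvPolynomial.C t) = algebraMap B _ t := Θ.commutes t
        rw [map_mul, h1] at hp
        rw [Algebra.smul_def, Algebra.smul_def, map_pow, pow_one, ← hp]
        ring
    exact ⟨theta_inj t (hcdx hA) htB X hX hXt Θ hsurj, hsurj⟩

end glue


theorem mapBaseChange_injective_mvPoly (B A : Type*) [CommRing B] [CommRing A] [Algebra B A]
    (r : ℕ) : Function.Injective (KaehlerDifferential.mapBaseChange B A (MvPolynomial (Fin r) A)) := by
  have := Algebra.H1Cotangent.exact_δ_mapBaseChange B A (MvPolynomial (Fin r) A)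
  have h : Subsingleton (Algebra.H1Cotangent A (MvPolynomial (Fin r) A)) :=
    Algebra.FormallySmooth.subsingleton_h1Cotangent
  rw [← LinearMap.ker_eq_bot, LinearMap.ker_eq_bot']
  intro x hx
  obtain ⟨y, rfl⟩ := (this x).1 hx
  rw [Subsingleton.elim y 0, map_zero]

theorem kaehler_mvPoly_equiv (B A : Type*) [CommRing B] [CommRing A] [Algebra B A] (r : ℕ) :
    Nonempty (Ω[MvPolynomial (Fin r) A⁄B] ≃ₗ[MvPolynomial (Fin r) A]
      (MvPolynomial (Fin r) A ⊗[A] Ω[A⁄B]) × (Fin r → MvPolynomial (Fin r) A)) := by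
  let T := MvPolynomial (Fin r) A
  have bas := KaehlerDifferential.mvPolynomialBasis A (Fin r)
  have : Module.Free T (Ω[T⁄A]) := Module.Free.of_basis bas
  obtain ⟨l, hl⟩ := Module.projective_lifting_property (KaehlerDifferential.map B A T T)
    (LinearMap.id : Ω[T⁄A] →ₗ[T] Ω[T⁄A]) (KaehlerDifferential.map_surjective B A T)
  have e := (Function.Exact.splitSurjectiveEquiv
    (KaehlerDifferential.exact_mapBaseChange_map B A T)
    (mapBaseChange_injective_mvPoly B A r) ⟨l, hl⟩).1
  exact ⟨e ≪≫ₗ LinearEquiv.prodCongr (LinearEquiv.refl T _) bas.equivFun⟩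

theorem kaehler_mvPoly_basis (B A : Type*) [CommRing B] [CommRing A] [Algebra B A] {N c : ℕ}
    (e : (Ω[A⁄B] × (Fin N → A)) ≃ₗ[A] (Fin c → A)) (r : ℕ) (hr : N ≤ r) :
    ∃ c' : ℕ, Nonempty (Module.Basis (Fin c') (MvPolynomial (Fin r) A)
      (Ω[MvPolynomial (Fin r) A⁄B])) := by
  obtain ⟨f⟩ := kaehler_mvPoly_equiv B A r
  obtain ⟨k, rfl⟩ := Nat.exists_eq_add_of_le hr
  let T := MvPolynomial (Fin (N + k)) A
  have e1 : (Fin (N + k) → T) ≃ₗ[T] (Fin N → T) × (Fin k → T) :=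
    LinearEquiv.funCongrLeft T T (finSumFinEquiv (m := N) (n := k)) ≪≫ₗ
      LinearEquiv.sumArrowLequivProdArrow (Fin N) (Fin k) T T
  have e2 : (Fin N → T) ≃ₗ[T] T ⊗[A] (Fin N → A) := (TensorProduct.piScalarRight A T T (Fin N)).symm
  have e3 : ((T ⊗[A] Ω[A⁄B]) × (T ⊗[A] (Fin N → A))) ≃ₗ[T] T ⊗[A] (Ω[A⁄B] × (Fin N → A)) :=
    (TensorProduct.prodRight A T T _ _).symm
  have e4 : T ⊗[A] (Ω[A⁄B] × (Fin N → A)) ≃ₗ[T] (Fin c → T) :=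
    e.baseChange A T _ _ ≪≫ₗ TensorProduct.piScalarRight A T T (Fin c)
  have e5 : Ω[T⁄B] ≃ₗ[T] (Fin (c + k) → T) :=
    f ≪≫ₗ LinearEquiv.prodCongr (LinearEquiv.refl T _) (e1 ≪≫ₗ
      LinearEquiv.prodCongr e2 (LinearEquiv.refl T _)) ≪≫ₗ
      (LinearEquiv.prodAssoc T (T ⊗[A] Ω[A⁄B]) (T ⊗[A] (Fin N → A)) (Fin k → T)).symm ≪≫ₗ
      LinearEquiv.prodCongr (e3 ≪≫ₗ e4) (LinearEquiv.refl T _) ≪≫ₗ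
      (LinearEquiv.sumArrowLequivProdArrow (Fin c) (Fin k) T T).symm ≪≫ₗ
      (LinearEquiv.funCongrLeft T T (finSumFinEquiv (m := c) (n := k))).symm
  exact ⟨c + k, ⟨Module.Basis.ofEquivFun e5⟩⟩

theorem kaehler_quot_basis {B M : Type*} [CommRing B] [CommRing M] [Algebra B M] (I : Ideal B)
    {c : ℕ} (b : Module.Basis (Fin c) M (Ω[M⁄B])) :
    Nonempty (Module.Basis (Fin c) (M ⧸ I.map (algebraMap B M))
      (Ω[(M ⧸ I.map (algebraMap B M))⁄(B ⧸ I)])) := by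
  have : Algebra.IsPushout B (B ⧸ I) M (M ⧸ I.map (algebraMap B M)) :=
    ⟨IsBaseChange.of_equiv
      (Algebra.TensorProduct.quotIdealMapEquivQuotTensor M I).symm.toLinearEquiv (by
        intro x
        have h := Algebra.TensorProduct.quotIdealMapEquivQuotTensor_mk M I x
        exact (AlgEquiv.symm_apply_eq _).2 h.symm)⟩
  exact ⟨(b.baseChange (M ⧸ I.map (algebraMap B M))).map
    (KaehlerDifferential.tensorKaehlerEquiv B (B ⧸ I) M (M ⧸ I.map (algebraMap B M)))⟩

/-- `(IM : t) = (I : t) M` for flat `M`. -/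
theorem flat_colon {R M : Type*} [CommRing R] [CommRing M] [Algebra R M] [Module.Flat R M]
    (I : Ideal R) (t : R) (y : M) (h : t • y ∈ I.map (algebraMap R M)) :
    ∃ (k : ℕ) (a : Fin k → R) (z : Fin k → M), (∀ j, t * a j ∈ I) ∧ y = ∑ j, a j • z j := by
  classical
  rw [Ideal.map, Ideal.span, Submodule.mem_span_image_iff_exists_fun] at h
  obtain ⟨s, hs, c, hc⟩ := h
  let f : Option s → R := fun o => o.elim t (fun i => - i.1)
  let x : Option s → M := fun o => o.elim y c
  have hrel : ∑ o, f o • x o = 0 := by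
    rw [Fintype.sum_option]
    simp only [f, x, Option.elim]
    rw [← hc, ← Finset.sum_add_distrib]
    refine Finset.sum_eq_zero fun i _ => ?_
    rw [smul_eq_mul, Algebra.smul_def, map_neg]
    ring
  obtain ⟨k, a, z, h1, h2⟩ := Module.Flat.isTrivialRelation_of_sum_smul_eq_zero (R := R) (M := M) hrel
  refine ⟨k, a none, z, fun j => ?_, h1 none⟩
  have := h2 j
  rw [Fintype.sum_option] at this
  simp only [f, Option.elim] at this
  rw [eq_neg_of_add_eq_zero_left this]
  refine neg_mem (sum_mem fun i _ => ?_)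
  exact Ideal.mul_mem_right _ _ (neg_mem (hs i.2))


theorem mem_map_mvPoly_iff {B M σ : Type*} [CommRing B] [CommRing M] [Algebra B M] (I : Ideal B)
    (v : MvPolynomial σ M) :
    v ∈ I.map (algebraMap B (MvPolynomial σ M)) ↔
      ∀ i, v.coeff i ∈ I.map (algebraMap B M) := by
  rw [IsScalarTower.algebraMap_eq B M (MvPolynomial σ M), ← Ideal.map_map,
    MvPolynomial.algebraMap_eq, MvPolynomial.mem_map_C_iff]

theorem map_mk_eq_zero_iff {B σ : Type*} [CommRing B] (I : Ideal B)
    (v : MvPolynomial σ B) :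
    MvPolynomial.map (Ideal.Quotient.mk I) v = 0 ↔ ∀ i, v.coeff i ∈ I := by
  rw [MvPolynomial.ext_iff]
  refine forall_congr' fun i => ?_
  rw [MvPolynomial.coeff_map, MvPolynomial.coeff_zero, Ideal.Quotient.eq_zero_iff_mem]

theorem aeval_map_mk {B M σ : Type*} [CommRing B] [CommRing M] [Algebra B M] (I : Ideal B)
    (X : σ → M) (p : MvPolynomial σ B) :
    MvPolynomial.aeval (fun i => Ideal.Quotient.mk (I.map (algebraMap B M)) (X i))
      (MvPolynomial.map (Ideal.Quotient.mk I) p) =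
    Ideal.Quotient.mk (I.map (algebraMap B M)) (MvPolynomial.aeval X p) := by
  have : (MvPolynomial.aeval (R := B ⧸ I)
      (fun i => Ideal.Quotient.mk (I.map (algebraMap B M)) (X i))).toRingHom.comp
      (MvPolynomial.map (Ideal.Quotient.mk I)) =
      (Ideal.Quotient.mk (I.map (algebraMap B M))).comp
        (MvPolynomial.aeval (R := B) X).toRingHom := by
    apply MvPolynomial.ringHom_ext
    · intro r
      simp
    · intro i
      simp
  exact RingHom.congr_fun this p

theorem mem_sup_span_map {B M : Type*} [CommRing B] [CommRing M] [Algebra B M] (I : Ideal B)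
    (t : B) (a : M) : a ∈ (I ⊔ Ideal.span {t}).map (algebraMap B M) ↔
      algebraMap (B ⧸ I) (M ⧸ I.map (algebraMap B M)) (Ideal.Quotient.mk I t) ∣
        Ideal.Quotient.mk (I.map (algebraMap B M)) a := by
  rw [Ideal.Quotient.algebraMap_quotient_map_quotient, Ideal.map_sup, Ideal.map_span,
    Set.image_singleton]
  constructor
  · intro h
    obtain ⟨x, hx, y, hy, rfl⟩ := Submodule.mem_sup.1 h
    rw [map_add, Ideal.Quotient.eq_zero_iff_mem.2 hx, zero_add]
    exact map_dvd _ (Ideal.mem_span_singleton.1 hy)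
  · rintro ⟨c, hc⟩
    obtain ⟨c, rfl⟩ := Ideal.Quotient.mk_surjective c
    rw [← map_mul, Ideal.Quotient.eq] at hc
    have : a = (a - algebraMap B M t * c) + algebraMap B M t * c := by ring
    rw [this]
    exact Submodule.add_mem_sup hc (Ideal.mem_span_singleton.2 (dvd_mul_right _ _))

theorem gluing_mod {B M : Type*} [CommRing B] [CommRing M] [Algebra B M]
    [IsNoetherianRing B] [Algebra.FiniteType B M] (I : Ideal B) (t : B)
    (htB : ∀ b, t * b ∈ I → b ∈ I)
    (htM : ∀ a : M, t • a ∈ I.map (algebraMap B M) → a ∈ I.map (algebraMap B M))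
    {dx dy c : ℕ} (X : Fin dx → M)
    (hX : ∀ p : MvPolynomial (Fin dx) B, MvPolynomial.aeval X p ∈ I.map (algebraMap B M) →
      ∀ i, p.coeff i ∈ I)
    (hXt : ∀ a : M, ∃ (N : ℕ) (f : MvPolynomial (Fin dx) B),
      t ^ N • a - MvPolynomial.aeval X f ∈ I.map (algebraMap B M))
    (Y : Fin dy → M)
    (hYs : ∀ a : M, ∃ p : MvPolynomial (Fin dy) B,
      a - MvPolynomial.aeval Y p ∈ (I ⊔ Ideal.span {t}).map (algebraMap B M))
    (hYi : ∀ p : MvPolynomial (Fin dy) B,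
      MvPolynomial.aeval Y p ∈ (I ⊔ Ideal.span {t}).map (algebraMap B M) →
      ∀ i, p.coeff i ∈ I ⊔ Ideal.span {t})
    (b : Module.Basis (Fin c) M (Ω[M⁄B])) :
    ∃ U : Fin dy ⊕ Fin c → MvPolynomial (Fin dy) M,
      (∀ v, ∃ p : MvPolynomial (Fin dy ⊕ Fin c) B,
        v - MvPolynomial.aeval U p ∈ I.map (algebraMap B (MvPolynomial (Fin dy) M))) ∧
      (∀ p : MvPolynomial (Fin dy ⊕ Fin c) B,
        MvPolynomial.aeval U p ∈ I.map (algebraMap B (MvPolynomial (Fin dy) M)) →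
        ∀ i, p.coeff i ∈ I) := by
  classical
  let IM := I.map (algebraMap B M)
  obtain ⟨b'⟩ := kaehler_quot_basis I b
  have hfin : Algebra.FiniteType B (M ⧸ IM) := inferInstance
  have hfin' : Algebra.FiniteType (B ⧸ I) (M ⧸ IM) :=
    Algebra.FiniteType.of_restrictScalars_finiteType B (B ⧸ I) (M ⧸ IM)
  have hms : Function.Surjective (Ideal.Quotient.mk I) := Ideal.Quotient.mk_surjective
  have smk : ∀ (r : B) (a : M), (Ideal.Quotient.mk I r) • (Ideal.Quotient.mk IM a) =
      Ideal.Quotient.mk IM (r • a) := by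
    intro r a
    rw [Algebra.smul_def, Algebra.smul_def, Ideal.Quotient.algebraMap_quotient_map_quotient,
      map_mul]
  obtain ⟨Θ, hΘ⟩ := gluing (B := B ⧸ I) (A := M ⧸ IM) (Ideal.Quotient.mk I t)
    (by
      intro a ha
      obtain ⟨a, rfl⟩ := hms a
      rw [smul_eq_mul, ← map_mul, Ideal.Quotient.eq_zero_iff_mem] at ha
      exact Ideal.Quotient.eq_zero_iff_mem.2 (htB a ha))
    (by
      intro a ha
      obtain ⟨a, rfl⟩ := Ideal.Quotient.mk_surjective a
      rw [smk, Ideal.Quotient.eq_zero_iff_mem] at ha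
      exact Ideal.Quotient.eq_zero_iff_mem.2 (htM a ha))
    (fun i => Ideal.Quotient.mk IM (X i))
    (by
      rw [algebraicIndependent_iff]
      intro p hp
      obtain ⟨p, rfl⟩ := MvPolynomial.map_surjective _ hms p
      rw [aeval_map_mk, Ideal.Quotient.eq_zero_iff_mem] at hp
      rw [map_mk_eq_zero_iff]
      exact hX p hp)
    (by
      intro a
      obtain ⟨a, rfl⟩ := Ideal.Quotient.mk_surjective a
      obtain ⟨N, f, hf⟩ := hXt a
      refine ⟨N, MvPolynomial.map (Ideal.Quotient.mk I) f, ?_⟩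
      rw [aeval_map_mk, ← map_pow, smk]
      exact Ideal.Quotient.eq.2 hf)
    (fun i => Ideal.Quotient.mk IM (Y i))
    (by
      intro a
      obtain ⟨a, rfl⟩ := Ideal.Quotient.mk_surjective a
      obtain ⟨p, hp⟩ := hYs a
      refine ⟨MvPolynomial.map (Ideal.Quotient.mk I) p, ?_⟩
      rw [aeval_map_mk, ← map_sub]
      exact (mem_sup_span_map I t _).1 hp)
    (by
      intro p hp
      obtain ⟨p, rfl⟩ := MvPolynomial.map_surjective _ hms p
      rw [aeval_map_mk] at hp
      have h1 := hYi p ((mem_sup_span_map I t _).2 hp)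
      rw [MvPolynomial.C_dvd_iff_dvd_coeff]
      intro i
      rw [MvPolynomial.coeff_map]
      obtain ⟨x, hx, y, hy, hxy⟩ := Submodule.mem_sup.1 (h1 i)
      rw [← hxy, map_add, Ideal.Quotient.eq_zero_iff_mem.2 hx, zero_add]
      exact map_dvd _ (Ideal.mem_span_singleton.1 hy)) b'
  choose U hU using fun g => MvPolynomial.map_surjective _
    (Ideal.Quotient.mk_surjective (I := IM)) (Θ (MvPolynomial.X g))
  have key : ∀ p, MvPolynomial.map (Ideal.Quotient.mk IM) (MvPolynomial.aeval U p) =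
      Θ (MvPolynomial.map (Ideal.Quotient.mk I) p) := by
    intro p
    have : (MvPolynomial.map (Ideal.Quotient.mk IM)).comp (MvPolynomial.aeval (R := B) U).toRingHom =
        Θ.toRingHom.comp (MvPolynomial.map (Ideal.Quotient.mk I)) := by
      apply MvPolynomial.ringHom_ext
      · intro r
        have h1 : Θ (MvPolynomial.C (Ideal.Quotient.mk I r)) =
          algebraMap (B ⧸ I) _ (Ideal.Quotient.mk I r) := Θ.commutes _
        simp only [RingHom.comp_apply, AlgHom.toRingHom_eq_coe, RingHom.coe_coe,
          MvPolynomial.aeval_C, MvPolynomial.map_C]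
        rw [h1, MvPolynomial.algebraMap_apply, MvPolynomial.map_C, MvPolynomial.algebraMap_apply,
          Ideal.Quotient.algebraMap_quotient_map_quotient]
      · intro i
        simp [hU]
    exact RingHom.congr_fun this p
  have hmem : ∀ v : MvPolynomial (Fin dy) M,
      v ∈ I.map (algebraMap B (MvPolynomial (Fin dy) M)) ↔
        MvPolynomial.map (Ideal.Quotient.mk IM) v = 0 := by
    intro v
    rw [mem_map_mvPoly_iff, map_mk_eq_zero_iff]
  refine ⟨U, ?_, ?_⟩
  · intro v
    obtain ⟨p, hp⟩ := hΘ.2 (MvPolynomial.map (Ideal.Quotient.mk IM) v)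
    obtain ⟨p, rfl⟩ := MvPolynomial.map_surjective _ hms p
    refine ⟨p, ?_⟩
    rw [hmem, map_sub, key, hp, sub_self]
  · intro p hp
    rw [hmem, key] at hp
    rw [← map_mk_eq_zero_iff]
    exact hΘ.1 (hp.trans (map_zero Θ).symm)


/-- A homomorphism which becomes bijective modulo `I`. -/
def IsoMod {R P M : Type*} [CommRing R] [CommRing P] [CommRing M] [Algebra R P] [Algebra R M]
    (I : Ideal R) (f : P →ₐ[R] M) : Prop :=
  (∀ v, ∃ p, v - f p ∈ I.map (algebraMap R M)) ∧
    ∀ p, f p ∈ I.map (algebraMap R M) → p ∈ I.map (algebraMap R P)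

theorem map_mem_map {R P M : Type*} [CommRing R] [CommRing P] [CommRing M] [Algebra R P]
    [Algebra R M] (I : Ideal R) (f : P →ₐ[R] M) {p : P} (h : p ∈ I.map (algebraMap R P)) :
    f p ∈ I.map (algebraMap R M) := by
  have := Ideal.mem_map_of_mem f.toRingHom h
  rw [Ideal.map_map] at this
  simpa using this

theorem smul_mem_map {R M : Type*} [CommRing R] [CommRing M]
    [Algebra R M] {I : Ideal R} {a : R} (h : a ∈ I) (x : M) :
    a • x ∈ I.map (algebraMap R M) := by
  rw [Algebra.smul_def]
  exact Ideal.mul_mem_right _ _ (Ideal.mem_map_of_mem _ h)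

theorem smul_mem_map_of {R M : Type*} [CommRing R] [CommRing M]
    [Algebra R M] {I : Ideal R} (a : R) {x : M} (h : x ∈ I.map (algebraMap R M)) :
    a • x ∈ I.map (algebraMap R M) := by
  rw [Algebra.smul_def]
  exact Ideal.mul_mem_left _ _ h

theorem smul_mem_map_mul {R M : Type*} [CommRing R] [CommRing M]
    [Algebra R M] {I J : Ideal R} {a : R} (h : ∀ b ∈ J, a * b ∈ I) {x : M}
    (hx : x ∈ J.map (algebraMap R M)) :
    a • x ∈ I.map (algebraMap R M) := by
  induction hx using Submodule.span_induction with
  | mem x hx =>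
    obtain ⟨b, hb, rfl⟩ := hx
    rw [Algebra.smul_def, ← map_mul]
    exact Ideal.mem_map_of_mem _ (h b hb)
  | zero => simp
  | add x y _ _ hx hy =>
    rw [smul_add]
    exact add_mem hx hy
  | smul c x _ hx =>
    rw [smul_comm]
    exact Ideal.mul_mem_left _ _ hx

theorem IsoMod.comp {R P M L : Type*} [CommRing R] [CommRing P] [CommRing M] [CommRing L]
    [Algebra R P] [Algebra R M] [Algebra R L] {I : Ideal R} {f : P →ₐ[R] M} {g : M →ₐ[R] L}
    (hf : IsoMod I f) (hg : IsoMod I g) : IsoMod I (g.comp f) := by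
  refine ⟨fun v => ?_, fun p hp => hf.2 _ (hg.2 _ hp)⟩
  obtain ⟨u, hu⟩ := hg.1 v
  obtain ⟨p, hp⟩ := hf.1 u
  refine ⟨p, ?_⟩
  have := add_mem hu (map_mem_map I g hp)
  simpa using this

theorem IsoMod.of_equiv {R P M : Type*} [CommRing R] [CommRing P] [CommRing M]
    [Algebra R P] [Algebra R M] (I : Ideal R) (e : P ≃ₐ[R] M) : IsoMod I e.toAlgHom := by
  refine ⟨fun v => ⟨e.symm v, by simp⟩, fun p hp => ?_⟩
  have := map_mem_map I e.symm.toAlgHom hp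
  simpa using this

theorem mem_sup_span {R M : Type*} [CommRing R] [CommRing M] [Algebra R M] {I : Ideal R} {t : R}
    {x : M} : x ∈ (I ⊔ Ideal.span {t}).map (algebraMap R M) ↔
    ∃ y, x - t • y ∈ I.map (algebraMap R M) := by
  rw [Ideal.map_sup, Ideal.map_span, Set.image_singleton]
  constructor
  · intro h
    obtain ⟨x, hx, y, hy, rfl⟩ := Submodule.mem_sup.1 h
    obtain ⟨c, rfl⟩ := Ideal.mem_span_singleton.1 hy
    exact ⟨c, by rw [Algebra.smul_def]; simpa using hx⟩
  · rintro ⟨y, hy⟩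
    have : x = (x - t • y) + algebraMap R M t * y := by rw [Algebra.smul_def]; ring
    rw [this]
    exact Submodule.add_mem_sup hy (Ideal.mem_span_singleton.2 (dvd_mul_right _ _))

theorem IsoMod.nilp {R P M : Type*} [CommRing R] [CommRing P] [CommRing M]
    [Algebra R P] [Algebra R M] [Module.Flat R M] {I : Ideal R} {t : R} (ht : t * t ∈ I)
    {f : P →ₐ[R] M} (hf : IsoMod (I ⊔ Ideal.span {t}) f) : IsoMod I f := by
  have hs : ∀ v, ∃ p, v - f p ∈ I.map (algebraMap R M) := by
    intro v
    obtain ⟨p, hp⟩ := hf.1 v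
    obtain ⟨y, hy⟩ := mem_sup_span.1 hp
    obtain ⟨q, hq⟩ := hf.1 y
    obtain ⟨z, hz⟩ := mem_sup_span.1 hq
    refine ⟨p + t • q, ?_⟩
    have h1 := smul_mem_map_of t hz
    have h2 := smul_mem_map (M := M) ht z
    have := add_mem (add_mem hy h1) h2
    convert this using 1
    simp only [map_add, map_smul, mul_smul, smul_sub]
    ring
  have hle : I.map (algebraMap R M) ≤ (I ⊔ Ideal.span {t}).map (algebraMap R M) :=
    Ideal.map_mono le_sup_left
  refine ⟨hs, fun p hp => ?_⟩
  obtain ⟨x, hx⟩ := mem_sup_span.1 (hf.2 p (hle hp))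
  have h1 : t • f x ∈ I.map (algebraMap R M) := by
    have := sub_mem hp (map_mem_map I f hx)
    simpa using this
  obtain ⟨k, a, z, ha, hz⟩ := flat_colon I t _ h1
  choose q hq using fun j => hs (z j)
  have h2 : f (x - ∑ j, a j • q j) ∈ I.map (algebraMap R M) := by
    have : f (x - ∑ j, a j • q j) = ∑ j, a j • (z j - f (q j)) := by
      simp [hz, smul_sub, map_sum]
    rw [this]
    exact sum_mem fun j _ => smul_mem_map_of _ (hq j)
  obtain ⟨w, hw⟩ := mem_sup_span.1 (hf.2 _ (hle h2))
  have h3 : p = (p - t • x) + t • ((x - ∑ j, a j • q j) - t • w) + (t * t) • w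
      + ∑ j, (t * a j) • q j := by
    simp only [smul_sub, mul_smul, Finset.smul_sum]
    ring
  rw [h3]
  exact add_mem (add_mem (add_mem hx (smul_mem_map_of t hw)) (smul_mem_map ht w))
    (sum_mem fun j _ => smul_mem_map (ha j) _)

theorem flat_nzd {R M : Type*} [CommRing R] [CommRing M] [Algebra R M] [Module.Flat R M]
    {I : Ideal R} {t : R} (ht : ∀ a, t * a ∈ I → a ∈ I) {x : M}
    (hx : t • x ∈ I.map (algebraMap R M)) : x ∈ I.map (algebraMap R M) := by
  obtain ⟨k, a, z, ha, rfl⟩ := flat_colon I t _ hx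
  exact sum_mem fun j _ => smul_mem_map (ht _ (ha j)) _

/-- extension to polynomial rings -/
theorem IsoMod.mvPoly {R P M : Type*} [CommRing R] [CommRing P] [CommRing M]
    [Algebra R P] [Algebra R M] {I : Ideal R} {f : P →ₐ[R] M} (hf : IsoMod I f) (σ : Type*) :
    IsoMod I (MvPolynomial.mapAlgHom (σ := σ) f) := by
  refine ⟨fun v => ?_, fun p hp => ?_⟩
  · induction v using MvPolynomial.induction_on with
    | C a =>
      obtain ⟨p, hp⟩ := hf.1 a
      refine ⟨MvPolynomial.C p, ?_⟩
      have := map_mem_map I (IsScalarTower.toAlgHom R M (MvPolynomial σ M)) hp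
      simpa [MvPolynomial.algebraMap_eq] using this
    | add p q hp hq =>
      obtain ⟨a, ha⟩ := hp
      obtain ⟨b, hb⟩ := hq
      refine ⟨a + b, ?_⟩
      convert add_mem ha hb using 1
      rw [map_add]; ring
    | mul_X p i hp =>
      obtain ⟨a, ha⟩ := hp
      refine ⟨a * MvPolynomial.X i, ?_⟩
      convert Ideal.mul_mem_right (MvPolynomial.X i) _ ha using 1
      rw [map_mul]; simp; ring
  · rw [mem_map_mvPoly_iff] at hp ⊢
    intro i
    apply hf.2
    have := hp i
    simpa [MvPolynomial.coeff_map] using this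



section gen
variable {R B A : Type*} [CommRing R] [CommRing B] [CommRing A] [Algebra R B] [Algebra R A]
  [Algebra B A] [IsScalarTower R B A]

/-- homogenisation -/
theorem exists_homog {d : ℕ} (e : R) (X : Fin d → A) (p : MvPolynomial (Fin d) B) :
    ∃ (D : ℕ) (q : MvPolynomial (Fin d) B),
      e ^ D • MvPolynomial.aeval X p = MvPolynomial.aeval (fun i => e • X i) q := by
  induction p using MvPolynomial.induction_on with
  | C a => exact ⟨0, MvPolynomial.C a, by simp⟩
  | add p q hp hq =>
    obtain ⟨D, f, hf⟩ := hp
    obtain ⟨E, g, hg⟩ := hq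
    refine ⟨D + E, algebraMap R B (e ^ E) • f + algebraMap R B (e ^ D) • g, ?_⟩
    rw [map_add, map_add, map_smul, map_smul, ← hf, ← hg, algebraMap_smul, algebraMap_smul,
      smul_smul, smul_smul, smul_add, ← pow_add, ← pow_add, add_comm E D]
  | mul_X p i hp =>
    obtain ⟨D, f, hf⟩ := hp
    refine ⟨D + 1, f * MvPolynomial.X i, ?_⟩
    rw [map_mul, map_mul, ← hf, MvPolynomial.aeval_X, MvPolynomial.aeval_X, pow_succ, mul_smul_comm,
      smul_mul_assoc, smul_smul, mul_comm e]

theorem aeval_smul_eq {d : ℕ} (e : R) (X : Fin d → A) (p : MvPolynomial (Fin d) B) :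
    ∃ q : MvPolynomial (Fin d) B, MvPolynomial.aeval (fun i => e • X i) p =
      MvPolynomial.aeval X q ∧ ∀ i, q.coeff i = e ^ (i.degree) • p.coeff i := by
  induction p using MvPolynomial.induction_on' with
  | monomial u a =>
    refine ⟨MvPolynomial.monomial u (e ^ u.degree • a), ?_, fun i => ?_⟩
    · rw [MvPolynomial.aeval_monomial, MvPolynomial.aeval_monomial]
      simp only [Finsupp.prod, smul_pow, Finset.prod_smul, Finset.prod_pow_eq_pow_sum, Finsupp.degree_apply]
      rw [Algebra.smul_def, Algebra.smul_def, map_mul, ← IsScalarTower.algebraMap_apply]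
      ring
    · rw [MvPolynomial.coeff_monomial, MvPolynomial.coeff_monomial]
      split_ifs with h
      · rw [h]
      · simp
  | add p q hp hq =>
    obtain ⟨f, hf, hf'⟩ := hp
    obtain ⟨g, hg, hg'⟩ := hq
    exact ⟨f + g, by simp [hf, hg], fun i => by simp [hf', hg']⟩

theorem aeval_sub_mem {d : ℕ} (K : Ideal A) (X Y : Fin d → A) (h : ∀ i, X i - Y i ∈ K)
    (p : MvPolynomial (Fin d) B) : MvPolynomial.aeval X p - MvPolynomial.aeval Y p ∈ K := by
  induction p using MvPolynomial.induction_on with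
  | C a => simp
  | add p q hp hq =>
    convert add_mem hp hq using 1
    simp only [map_add]; ring
  | mul_X p i hp =>
    convert add_mem (Ideal.mul_mem_right (X i) K hp)
      (Ideal.mul_mem_left K (MvPolynomial.aeval Y p) (h i)) using 1
    simp only [map_mul, MvPolynomial.aeval_X]; ring

/-- Elements which lie in the image of `f` modulo `I` up to a power of `t`. -/
theorem exists_pow_of_adjoin {P M : Type*} [CommRing P] [CommRing M] [Algebra B P] [Algebra B M]
    [Algebra R M] [Algebra R P] [IsScalarTower R B M]  [IsScalarTower R B P]
    (I : Ideal R) (t : R) (f : P →ₐ[B] M) (S : Set M)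
    (hS : ∀ a ∈ S, ∃ (N : ℕ) (p : P), t ^ N • a - f p ∈ I.map (algebraMap R M)) (a : M)
    (ha : a ∈ Algebra.adjoin B S) :
    ∃ (N : ℕ) (p : P), t ^ N • a - f p ∈ I.map (algebraMap R M) := by
  have fs : ∀ (r : R) x, f (r • x) = r • f x := fun r x => map_smul (f.restrictScalars R) r x
  induction ha using Algebra.adjoin_induction with
  | mem x hx => exact hS x hx
  | algebraMap b => exact ⟨0, algebraMap B P b, by simp⟩
  | add x y _ _ hx hy =>
    obtain ⟨N, p, hp⟩ := hx
    obtain ⟨L, q, hq⟩ := hy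
    refine ⟨N + L, t ^ L • p + t ^ N • q, ?_⟩
    convert add_mem (smul_mem_map_of (t ^ L) hp) (smul_mem_map_of (t ^ N) hq) using 1
    rw [map_add, fs, fs, smul_sub, smul_sub, smul_smul, smul_smul, smul_add, pow_add,
      mul_comm (t ^ L)]
    ring
  | mul x y _ _ hx hy =>
    obtain ⟨N, p, hp⟩ := hx
    obtain ⟨L, q, hq⟩ := hy
    refine ⟨N + L, p * q, ?_⟩
    convert add_mem (Ideal.mul_mem_right (t ^ L • y) _ hp)
      (Ideal.mul_mem_left _ (f p) hq) using 1
    rw [map_mul, pow_add, sub_mul, mul_sub, smul_mul_smul_comm]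
    ring

/-- The generic coordinates modulo a radical ideal. -/
theorem radical_step [IsNoetherianRing R] [Algebra.FiniteType B A] [Module.Flat R B] {d : ℕ}
    (h4 : ∀ P : Ideal R, P.IsPrime → ∃ X : Fin d → A,
      (∀ a : A, ∃ s ∉ P, ∃ p : MvPolynomial (Fin d) B,
        s • a - MvPolynomial.aeval X p ∈ P.map (algebraMap R A)) ∧
      (∀ p : MvPolynomial (Fin d) B, MvPolynomial.aeval X p ∈ P.map (algebraMap R A) →
        ∀ i, p.coeff i ∈ P.map (algebraMap R B)))
    (I : Ideal R) (hI : I.IsRadical) (hI' : I ≠ ⊤) :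
    ∃ (t : R) (X : Fin d → A), t ∉ I ∧ (∀ b, t * b ∈ I → b ∈ I) ∧
      (∀ a : A, ∃ (N : ℕ) (p : MvPolynomial (Fin d) B),
        t ^ N • a - MvPolynomial.aeval X p ∈ I.map (algebraMap R A)) ∧
      (∀ p : MvPolynomial (Fin d) B, MvPolynomial.aeval X p ∈ I.map (algebraMap R A) →
        ∀ i, p.coeff i ∈ I.map (algebraMap R B)) := by
  classical
  have hfin := Ideal.finite_minimalPrimes_of_isNoetherianRing R I
  let ι := I.minimalPrimes
  have : Fintype ι := hfin.fintype
  have hprime : ∀ i : ι, i.1.IsPrime := fun i => i.2.1.1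
  have hle : ∀ i : ι, I ≤ i.1 := fun i => i.2.1.2
  have hinf : ∀ x, (∀ i : ι, x ∈ i.1) → x ∈ I := by
    intro x hx
    rw [← hI.radical, ← Ideal.sInf_minimalPrimes]
    exact Ideal.mem_sInf.2 fun {J} hJ => hx ⟨J, hJ⟩
  have hne : Nonempty ι := by
    obtain ⟨J, hJ⟩ := Ideal.nonempty_minimalPrimes hI'
    exact ⟨⟨J, hJ⟩⟩
  have he : ∀ i : ι, ∃ e : R, e ∉ i.1 ∧ ∀ j : ι, j ≠ i → e ∈ j.1 := by
    intro i
    have : ∀ j : ι, ∃ x, (j ≠ i → x ∈ j.1) ∧ x ∉ i.1 := by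
      intro j
      by_cases hj : j = i
      · exact ⟨1, fun h => absurd hj h, fun h => (hprime i).ne_top ((Ideal.eq_top_iff_one _).2 h)⟩
      · have : ¬ j.1 ≤ i.1 := fun h => hj (Subtype.ext (le_antisymm h (i.2.2 j.2.1 h)))
        obtain ⟨x, hx, hx'⟩ := Set.not_subset.1 this
        exact ⟨x, fun _ => hx, hx'⟩
    choose x hx hx' using this
    refine ⟨∏ j, x j, ?_, fun j hj => Ideal.mem_of_dvd _ (Finset.dvd_prod_of_mem _ (Finset.mem_univ j)) (hx j hj)⟩
    have := hprime i
    rw [Ideal.IsPrime.prod_mem_iff]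
    rintro ⟨j, _, hj⟩
    exact hx' j hj
  choose e he he' using he
  choose X0 hX0s hX0i using fun i : ι => h4 i.1 (hprime i)
  -- an element outside all minimal primes is regular mod I
  have hreg : ∀ t : R, (∀ i : ι, t ∉ i.1) → ∀ b, t * b ∈ I → b ∈ I := fun t ht b hb =>
    hinf b fun i => ((hprime i).mem_or_mem (hle i hb)).resolve_left (ht i)
  have hsum : ∀ c : ι → R, (∀ i, c i ∉ i.1) → ∀ j : ι, ∑ i, e i * c i ∉ j.1 := by
    intro c hc j hj
    rw [← Finset.add_sum_erase _ _ (Finset.mem_univ j)] at hj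
    have h2 : ∑ i ∈ Finset.univ.erase j, e i * c i ∈ j.1 := sum_mem fun i hi =>
      Ideal.mul_mem_right _ _ (he' i j (Finset.ne_of_mem_erase hi).symm)
    have h3 := (Ideal.add_mem_iff_left _ h2).1 hj
    rcases (hprime j).mem_or_mem h3 with h | h
    · exact he j h
    · exact hc j h
  have heI : ∀ i : ι, ∀ b ∈ i.1, e i * b ∈ I := by
    intro i b hb
    refine hinf _ fun j => ?_
    by_cases hj : j = i
    · subst hj
      exact Ideal.mul_mem_left _ _ hb
    · exact Ideal.mul_mem_right _ _ (he' i j hj)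
  let X : Fin d → A := fun k => ∑ i, e i • X0 i k
  have hX : ∀ (j : ι) k, X k - e j • X0 j k ∈ j.1.map (algebraMap R A) := by
    intro j k
    have : X k - e j • X0 j k = ∑ i ∈ Finset.univ.erase j, e i • X0 i k := by
      simp only [X]
      rw [← Finset.add_sum_erase _ _ (Finset.mem_univ j)]
      ring
    rw [this]
    exact sum_mem fun i hi => smul_mem_map (he' i j (Finset.ne_of_mem_erase hi).symm) _
  have key : ∀ a : A, ∃ (t : R) (p : MvPolynomial (Fin d) B), (∀ j : ι, t ∉ j.1) ∧
      t • a - MvPolynomial.aeval X p ∈ I.map (algebraMap R A) := by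
    intro a
    choose s hs p hp using fun i => hX0s i a
    choose D q hq using fun i => exists_homog (e i) (X0 i) (p i)
    refine ⟨∑ i, e i * (e i ^ D i * s i), ∑ i, algebraMap R B (e i) • q i, hsum _ ?_, ?_⟩
    · intro i hi
      rcases (hprime i).mem_or_mem hi with h | h
      · exact he i ((hprime i).mem_of_pow_mem _ h)
      · exact hs i h
    · have : (∑ i, e i * (e i ^ D i * s i)) • a -
          MvPolynomial.aeval X (∑ i, algebraMap R B (e i) • q i) =
          ∑ i, e i • (e i ^ D i • (s i • a - MvPolynomial.aeval (X0 i) (p i)) -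
            (MvPolynomial.aeval X (q i) - MvPolynomial.aeval (fun k => e i • X0 i k) (q i))) := by
        rw [Finset.sum_smul, map_sum, ← Finset.sum_sub_distrib]
        refine Finset.sum_congr rfl fun i _ => ?_
        rw [map_smul, algebraMap_smul, ← hq i]
        module
      rw [this]
      refine sum_mem fun i _ => smul_mem_map_mul (heI i) (sub_mem ?_ ?_)
      · exact smul_mem_map_of _ (hp i)
      · exact aeval_sub_mem _ _ _ (hX i) _
  obtain ⟨S, hS⟩ := (inferInstance : Algebra.FiniteType B A).out
  choose τ p hτ hp using key
  have htau : ∀ j : ι, ∏ a ∈ S, τ a ∉ j.1 := by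
    intro j
    have := hprime j
    rw [Ideal.IsPrime.prod_mem_iff]
    rintro ⟨a, _, ha⟩
    exact hτ a j ha
  refine ⟨∏ a ∈ S, τ a, X, fun h => htau hne.some (hle _ h), hreg _ htau, fun a => ?_, fun f hf i => ?_⟩
  · refine exists_pow_of_adjoin I _ (MvPolynomial.aeval X) (S : Set A) ?_ a (by rw [hS]; trivial)
    intro a ha
    refine ⟨1, algebraMap R B (∏ b ∈ S.erase a, τ b) • p a, ?_⟩
    have := smul_mem_map_of (∏ b ∈ S.erase a, τ b) (hp a)
    rwa [smul_sub, smul_smul, Finset.prod_erase_mul _ _ ha, ← algebraMap_smul B (∏ b ∈ S.erase a, τ b) (MvPolynomial.aeval X (p a)), ← map_smul, ← pow_one (∏ a ∈ S, τ a)] at this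
  · have h1 : ∀ j : ι, f.coeff i ∈ j.1.map (algebraMap R B) := by
      intro j
      obtain ⟨g, hg, hg'⟩ := aeval_smul_eq (e j) (X0 j) f
      have h2 : MvPolynomial.aeval (X0 j) g ∈ j.1.map (algebraMap R A) := by
        rw [← hg]
        have := sub_mem (Ideal.map_mono (hle j) hf) (aeval_sub_mem _ _ _ (hX j) f)
        simpa using this
      have h3 := hX0i j g h2 i
      rw [hg'] at h3
      refine flat_nzd (t := e j ^ i.degree) ?_ h3
      intro a ha
      exact ((hprime j).mem_or_mem ha).resolve_left fun h => he j ((hprime j).mem_of_pow_mem _ h)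
    have h2 : (∑ j, e j * 1) • f.coeff i ∈ I.map (algebraMap R B) := by
      rw [Finset.sum_smul]
      refine sum_mem fun j _ => ?_
      rw [mul_one]
      exact smul_mem_map_mul (heI j) (h1 j)
    exact flat_nzd (hreg _ (hsum _ fun i h => (hprime i).ne_top ((Ideal.eq_top_iff_one _).2 h))) h2

end gen


section ind
variable {R B A : Type*} [CommRing R] [CommRing B] [CommRing A] [Algebra R B] [Algebra R A]
  [Algebra B A] [IsScalarTower R B A]

noncomputable def nestEquiv (A : Type*) [CommRing A] (k r : ℕ) :
    MvPolynomial (Fin (k + r)) A ≃ₐ[A] MvPolynomial (Fin k) (MvPolynomial (Fin r) A) :=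
  (MvPolynomial.renameEquiv A finSumFinEquiv.symm).trans
    (MvPolynomial.sumAlgEquiv A (Fin k) (Fin r))

theorem IsoMod.of_eq {P M : Type*} [CommRing P] [CommRing M] [Algebra R P] [Algebra R M]
    {I : Ideal R} {f g : P →ₐ[R] M} (hf : IsoMod I f) (h : ∀ x, g x = f x) : IsoMod I g := by
  have : g = f := AlgHom.ext h
  rwa [this]

theorem IsoMod.comp_equivs {P P' M M' : Type*} [CommRing P] [CommRing M] [CommRing P']
    [CommRing M'] [Algebra R P] [Algebra R M] [Algebra R P'] [Algebra R M']
    [Algebra B P] [Algebra B M] [Algebra B P'] [Algebra B M']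
    [IsScalarTower R B P] [IsScalarTower R B P'] [IsScalarTower R B M] [IsScalarTower R B M']
    {I : Ideal R} (f : P →ₐ[B] M) (hf : IsoMod I (f.restrictScalars R)) (e1 : P' ≃ₐ[B] P)
    (e2 : M ≃ₐ[B] M') :
    IsoMod I ((e2.toAlgHom.comp (f.comp e1.toAlgHom)).restrictScalars R) := by
  have h1 := IsoMod.of_equiv I (e1.restrictScalars R)
  have h2 := IsoMod.of_equiv I (e2.restrictScalars R)
  exact ((h1.comp hf).comp h2).of_eq fun x => rfl

theorem IsoMod.stab {I : Ideal R} {r s : ℕ}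
    (f : MvPolynomial (Fin s) B →ₐ[B] MvPolynomial (Fin r) A)
    (hf : IsoMod I (f.restrictScalars R)) (k : ℕ) :
    ∃ g : MvPolynomial (Fin (k + s)) B →ₐ[B] MvPolynomial (Fin (k + r)) A,
      IsoMod I (g.restrictScalars R) := by
  have h : IsoMod I ((MvPolynomial.mapAlgHom (σ := Fin k) f).restrictScalars R) :=
    (hf.mvPoly (Fin k)).of_eq fun x => rfl
  exact ⟨_, h.comp_equivs _ (nestEquiv B k s) ((nestEquiv A k r).restrictScalars B).symm⟩

theorem ideal_map_tower (M : Type*) [CommRing M] [Algebra R M] [Algebra B M]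
    [IsScalarTower R B M] (I : Ideal R) :
    (I.map (algebraMap R B)).map (algebraMap B M) = I.map (algebraMap R M) := by
  rw [Ideal.map_map, ← IsScalarTower.algebraMap_eq]

theorem radical_glue [IsNoetherianRing B] [Algebra.FiniteType B A]
    [Module.Flat R B] [Module.Flat R A] {d N c : ℕ}
    (e : (Ω[A⁄B] × (Fin N → A)) ≃ₗ[A] (Fin c → A)) (I : Ideal R) (t : R)
    (htI : ∀ b, t * b ∈ I → b ∈ I) (X : Fin d → A)
    (hXt : ∀ a : A, ∃ (N : ℕ) (p : MvPolynomial (Fin d) B),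
        t ^ N • a - MvPolynomial.aeval X p ∈ I.map (algebraMap R A))
    (hX : ∀ p : MvPolynomial (Fin d) B, MvPolynomial.aeval X p ∈ I.map (algebraMap R A) →
        ∀ i, p.coeff i ∈ I.map (algebraMap R B))
    (r s : ℕ) (hr : N ≤ r) (f : MvPolynomial (Fin s) B →ₐ[B] MvPolynomial (Fin r) A)
    (hf : IsoMod (I ⊔ Ideal.span {t}) (f.restrictScalars R)) :
    ∃ (r s : ℕ) (f : MvPolynomial (Fin s) B →ₐ[B] MvPolynomial (Fin r) A),
      IsoMod I (f.restrictScalars R) := by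
  have hflat : Module.Flat R (MvPolynomial (Fin r) A) := Module.Flat.trans R A _
  obtain ⟨c', ⟨b⟩⟩ := kaehler_mvPoly_basis B A e r hr
  let g0 : MvPolynomial (Fin (r + d)) B →ₐ[B] MvPolynomial (Fin r) A :=
    (MvPolynomial.mapAlgHom (MvPolynomial.aeval X)).comp (nestEquiv B r d).toAlgHom
  have hg0 : MvPolynomial.aeval (fun i => g0 (MvPolynomial.X i)) = g0 :=
    (MvPolynomial.aeval_unique g0).symm
  have hf0 : MvPolynomial.aeval (fun i => f (MvPolynomial.X i)) = f :=
    (MvPolynomial.aeval_unique f).symm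
  have hJ : I.map (algebraMap R B) ⊔ Ideal.span {algebraMap R B t} =
      (I ⊔ Ideal.span {t}).map (algebraMap R B) := by
    rw [Ideal.map_sup, Ideal.map_span, Set.image_singleton]
  obtain ⟨U, hUs, hUi⟩ := gluing_mod (B := B) (M := MvPolynomial (Fin r) A)
    (I.map (algebraMap R B)) (algebraMap R B t)
    (by
      intro b hb
      rw [← Algebra.smul_def] at hb
      exact flat_nzd htI hb)
    (by
      intro a ha
      rw [ideal_map_tower, algebraMap_smul] at ha
      rw [ideal_map_tower]
      exact flat_nzd htI ha)
    (fun i => g0 (MvPolynomial.X i))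
    (by
      intro p hp
      rw [ideal_map_tower, hg0] at hp
      rw [← mem_map_mvPoly_iff]
      have h1 : (nestEquiv B r d) p ∈ I.map (algebraMap R _) := by
        rw [mem_map_mvPoly_iff] at hp ⊢
        intro i
        rw [mem_map_mvPoly_iff]
        apply hX
        have := hp i
        simpa [g0, MvPolynomial.coeff_map] using this
      have h2 := map_mem_map I ((nestEquiv B r d).restrictScalars R).symm.toAlgHom h1
      simpa using h2)
    (by
      intro a
      obtain ⟨L, p, hp⟩ := exists_pow_of_adjoin I t g0
        (Set.range (algebraMap A (MvPolynomial (Fin r) A)) ∪ Set.range MvPolynomial.X)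
        (by
          rintro _ (⟨a, rfl⟩ | ⟨i, rfl⟩)
          · obtain ⟨L, p, hp⟩ := hXt a
            refine ⟨L, (nestEquiv B r d).symm (MvPolynomial.C p), ?_⟩
            have := map_mem_map I (IsScalarTower.toAlgHom R A (MvPolynomial (Fin r) A)) hp
            rw [map_sub, map_smul] at this
            simpa [g0, MvPolynomial.algebraMap_eq] using this
          · refine ⟨0, (nestEquiv B r d).symm (MvPolynomial.X i), ?_⟩
            simp [g0]) a
        (by
          induction a using MvPolynomial.induction_on with
          | C a => exact Algebra.subset_adjoin (Or.inl ⟨a, rfl⟩)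
          | add p q hp hq => exact add_mem hp hq
          | mul_X p i hp => exact mul_mem hp (Algebra.subset_adjoin (Or.inr ⟨i, rfl⟩)))
      refine ⟨L, p, ?_⟩
      rw [ideal_map_tower, hg0, ← map_pow, algebraMap_smul]
      exact hp)
    (fun i => f (MvPolynomial.X i))
    (by
      intro a
      rw [hJ, ideal_map_tower, hf0]
      exact hf.1 a)
    (by
      intro p
      rw [hJ, ideal_map_tower, hf0, ← mem_map_mvPoly_iff]
      exact hf.2 p) b
  have h1 : IsoMod I ((MvPolynomial.aeval (R := B) U).restrictScalars R) := by
    refine ⟨fun v => ?_, fun p hp => ?_⟩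
    · have := hUs v
      rw [ideal_map_tower] at this
      exact this
    · have := hUi p
      rw [ideal_map_tower, ← mem_map_mvPoly_iff] at this
      exact this hp
  let e1 : MvPolynomial (Fin (s + c')) B ≃ₐ[B] MvPolynomial (Fin s ⊕ Fin c') B :=
    MvPolynomial.renameEquiv B finSumFinEquiv.symm
  exact ⟨s + r, s + c', _, h1.comp_equivs _ e1 ((nestEquiv A s r).restrictScalars B).symm⟩

theorem main_induction [IsNoetherianRing R] [IsNoetherianRing B] [Algebra.FiniteType B A]
    [Module.Flat R B] [Module.Flat R A] {d N c : ℕ}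
    (e : (Ω[A⁄B] × (Fin N → A)) ≃ₗ[A] (Fin c → A))
    (h4 : ∀ P : Ideal R, P.IsPrime → ∃ X : Fin d → A,
      (∀ a : A, ∃ s ∉ P, ∃ p : MvPolynomial (Fin d) B,
        s • a - MvPolynomial.aeval X p ∈ P.map (algebraMap R A)) ∧
      (∀ p : MvPolynomial (Fin d) B, MvPolynomial.aeval X p ∈ P.map (algebraMap R A) →
        ∀ i, p.coeff i ∈ P.map (algebraMap R B)))
    (I : Ideal R) : ∃ (r s : ℕ) (f : MvPolynomial (Fin s) B →ₐ[B] MvPolynomial (Fin r) A),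
      IsoMod I (f.restrictScalars R) := by
  induction I using IsNoetherian.induction with
  | hgt I ih =>
  by_cases hI : I = ⊤
  · refine ⟨0, 0, MvPolynomial.aeval (fun i => 0), fun v => ⟨0, ?_⟩, fun p _ => ?_⟩
    · rw [hI, Ideal.map_top]; trivial
    · rw [hI, Ideal.map_top]; trivial
  by_cases hrad : ∃ t, t ∉ I ∧ t * t ∈ I
  · obtain ⟨t, ht, htt⟩ := hrad
    have hlt : I < I ⊔ Ideal.span {t} := by
      refine lt_of_le_of_ne le_sup_left fun h => ht ?_
      rw [h]
      exact Ideal.mem_sup_right (Ideal.mem_span_singleton_self t)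
    obtain ⟨r, s, f, hf⟩ := ih _ hlt
    have hflat : Module.Flat R (MvPolynomial (Fin r) A) := Module.Flat.trans R A _
    exact ⟨r, s, f, hf.nilp htt⟩
  · have hr : Ideal.IsRadical I := by
      rintro t ⟨k, hk⟩
      by_contra h
      have hx : ∃ k, t ^ k ∈ I := ⟨k, hk⟩
      classical
      have h0 : Nat.find hx ≠ 0 := by
        intro h0
        have := Nat.find_spec hx
        rw [h0, pow_zero] at this
        exact hI ((Ideal.eq_top_iff_one _).2 this)
      have h1 : Nat.find hx ≠ 1 := by
        intro h0
        have := Nat.find_spec hx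
        rw [h0, pow_one] at this
        exact h this
      refine hrad ⟨t ^ (Nat.find hx - 1), Nat.find_min hx (by omega), ?_⟩
      rw [← pow_add]
      exact Ideal.pow_mem_of_pow_mem I (Nat.find_spec hx) (by omega)
    obtain ⟨t, X, htI, htn, hXt, hX⟩ := radical_step h4 I hr hI
    have hlt : I < I ⊔ Ideal.span {t} := by
      refine lt_of_le_of_ne le_sup_left fun h => htI ?_
      rw [h]
      exact Ideal.mem_sup_right (Ideal.mem_span_singleton_self t)
    obtain ⟨r, s, f, hf⟩ := ih _ hlt
    obtain ⟨g, hg⟩ := IsoMod.stab f hf N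
    exact radical_glue e I t htn X hXt hX (N + r) (N + s) (by omega) g hg

theorem main_equiv [IsNoetherianRing R] [IsNoetherianRing B] [Algebra.FiniteType B A]
    [Module.Flat R B] [Module.Flat R A] {d N c : ℕ}
    (e : (Ω[A⁄B] × (Fin N → A)) ≃ₗ[A] (Fin c → A))
    (h4 : ∀ P : Ideal R, P.IsPrime → ∃ X : Fin d → A,
      (∀ a : A, ∃ s ∉ P, ∃ p : MvPolynomial (Fin d) B,
        s • a - MvPolynomial.aeval X p ∈ P.map (algebraMap R A)) ∧
      (∀ p : MvPolynomial (Fin d) B, MvPolynomial.aeval X p ∈ P.map (algebraMap R A) →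
        ∀ i, p.coeff i ∈ P.map (algebraMap R B))) :
    ∃ (r s : ℕ), Nonempty (MvPolynomial (Fin r) A ≃ₐ[B] MvPolynomial (Fin s) B) := by
  obtain ⟨r, s, f, hs, hi⟩ := main_induction e h4 ⊥
  simp only [Ideal.map_bot, Ideal.mem_bot, AlgHom.coe_restrictScalars'] at hs hi
  refine ⟨r, s, ⟨(AlgEquiv.ofBijective f ⟨?_, fun v => ?_⟩).symm⟩⟩
  · exact (injective_iff_map_eq_zero f).2 hi
  · obtain ⟨p, hp⟩ := hs v
    exact ⟨p, (sub_eq_zero.1 hp).symm⟩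

end ind


theorem fibre_abstract {R B A B' A' : Type*} [CommRing R] [CommRing B] [CommRing A] [CommRing B']
    [CommRing A'] [Algebra R B] [Algebra R A] [Algebra R B'] [Algebra R A']
    [Algebra B A] [IsScalarTower R B A] [Algebra B' A'] [IsScalarTower R B' A']
    (P : Ideal R) (hP : P.IsPrime) (β : B →ₐ[R] B') (α : A →ₐ[R] A')
    (hc : ∀ b, algebraMap B' A' (β b) = α (algebraMap B A b))
    (hα : ∀ a', ∃ s ∉ P, ∃ a, s • a' = α a) (hβ : ∀ b', ∃ s ∉ P, ∃ b, s • b' = β b)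
    (kα : ∀ a, α a = 0 ↔ a ∈ P.map (algebraMap R A))
    (kβ : ∀ b, β b = 0 → b ∈ P.map (algebraMap R B))
    (hreg : ∀ s ∉ P, ∀ b' : B', s • b' = 0 → b' = 0)
    {d : ℕ} (φ : A' ≃ₐ[B'] MvPolynomial (Fin d) B') :
    ∃ X : Fin d → A,
      (∀ a : A, ∃ s ∉ P, ∃ p : MvPolynomial (Fin d) B,
        s • a - MvPolynomial.aeval X p ∈ P.map (algebraMap R A)) ∧
      (∀ p : MvPolynomial (Fin d) B, MvPolynomial.aeval X p ∈ P.map (algebraMap R A) →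
        ∀ i, p.coeff i ∈ P.map (algebraMap R B)) := by
  classical
  let x : Fin d → A' := fun i => φ.symm (MvPolynomial.X i)
  have hx : ∀ p, MvPolynomial.aeval x p = φ.symm p := by
    intro p
    have : MvPolynomial.aeval x = φ.symm.toAlgHom := by
      apply MvPolynomial.algHom_ext
      intro i
      simp [x]
    exact AlgHom.congr_fun this p
  choose s0 hs0 a0 ha0 using fun i => hα (x i)
  let s := ∏ i, s0 i
  have hs : s ∉ P := by
    rw [Ideal.IsPrime.prod_mem_iff]
    rintro ⟨i, _, hi⟩
    exact hs0 i hi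
  let X : Fin d → A := fun i => (∏ j ∈ Finset.univ.erase i, s0 j) • a0 i
  have hX : ∀ i, α (X i) = s • x i := by
    intro i
    simp only [X, s]
    rw [map_smul, ← ha0, smul_smul, Finset.prod_erase_mul _ _ (Finset.mem_univ i)]
  have hmap : ∀ q : MvPolynomial (Fin d) B, α (MvPolynomial.aeval X q) =
      MvPolynomial.aeval (fun i => s • x i) (MvPolynomial.map β.toRingHom q) := by
    intro q
    induction q using MvPolynomial.induction_on with
    | C a => simp [hc]
    | add p q hp hq => rw [map_add, map_add, hp, hq, map_add, map_add]
    | mul_X p i hp => rw [map_mul, map_mul, hp, MvPolynomial.aeval_X, hX]; simp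
  have hlift : ∀ p : MvPolynomial (Fin d) B', ∃ u ∉ P, ∃ q : MvPolynomial (Fin d) B,
      u • p = MvPolynomial.map β.toRingHom q := by
    intro p
    induction p using MvPolynomial.induction_on with
    | C a =>
      obtain ⟨u, hu, b, hb⟩ := hβ a
      refine ⟨u, hu, MvPolynomial.C b, ?_⟩
      rw [MvPolynomial.map_C]
      change _ = MvPolynomial.C (β b)
      rw [← hb]
      exact (map_smul (IsScalarTower.toAlgHom R B' (MvPolynomial (Fin d) B')) u a).symm
    | add p q hp hq =>
      obtain ⟨u, hu, f, hf⟩ := hp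
      obtain ⟨v, hv, g, hg⟩ := hq
      refine ⟨u * v, fun h => (hP.mem_or_mem h).elim hu hv, v • f + u • g, ?_⟩
      have hsm : ∀ (r : R) (f : MvPolynomial (Fin d) B), MvPolynomial.map β.toRingHom (r • f) =
          r • MvPolynomial.map β.toRingHom f := fun r f =>
        map_smul (MvPolynomial.mapAlgHom (σ := Fin d) β) r f
      rw [map_add, hsm, hsm, ← hf, ← hg]
      module
    | mul_X p i hp =>
      obtain ⟨u, hu, f, hf⟩ := hp
      refine ⟨u, hu, f * MvPolynomial.X i, ?_⟩
      rw [map_mul, ← hf, MvPolynomial.map_X, smul_mul_assoc]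
  refine ⟨X, fun a => ?_, fun p hp i => ?_⟩
  · obtain ⟨D, q, hq⟩ := exists_homog s x (φ (α a))
    obtain ⟨u, hu, p, hp⟩ := hlift q
    refine ⟨u * s ^ D, fun h => (hP.mem_or_mem h).elim hu fun h => hs (hP.mem_of_pow_mem _ h),
      p, ?_⟩
    rw [← kα, map_sub, hmap, ← hp, map_smul, sub_eq_zero, mul_smul]
    have : MvPolynomial.aeval (fun i => s • x i) (u • q) =
      u • MvPolynomial.aeval (fun i => s • x i) q :=
      map_smul ((MvPolynomial.aeval (R := B') (fun i => s • x i)).restrictScalars R) u q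
    rw [this, ← hq, hx, AlgEquiv.symm_apply_apply]
  · obtain ⟨q, hq, hq'⟩ := aeval_smul_eq s x (MvPolynomial.map β.toRingHom p)
    rw [← kα, hmap, hq, hx, EmbeddingLike.map_eq_zero_iff] at hp
    have := hq' i
    rw [hp, MvPolynomial.coeff_zero, MvPolynomial.coeff_map] at this
    exact kβ _ (hreg _ (fun h => hs (hP.mem_of_pow_mem _ h)) _ this.symm)

theorem residue_lift {R M : Type*} [CommRing R] [AddCommGroup M] [Module R M]
    (P : Ideal R) [hP : P.IsPrime] (z : P.ResidueField ⊗[R] M) : ∃ s ∉ P, ∃ m : M, s • z = 1 ⊗ₜ m := by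
  induction z using TensorProduct.induction_on with
  | zero => exact ⟨1, fun h => hP.ne_top ((Ideal.eq_top_iff_one _).2 h), 0, by simp⟩
  | tmul k m =>
    obtain ⟨⟨a, ⟨b, hb⟩⟩, h⟩ := IsLocalization.surj (nonZeroDivisors (R ⧸ P)) k
    obtain ⟨a, rfl⟩ := Ideal.Quotient.mk_surjective a
    obtain ⟨b, rfl⟩ := Ideal.Quotient.mk_surjective b
    refine ⟨b, fun h => nonZeroDivisors.ne_zero hb (Ideal.Quotient.eq_zero_iff_mem.2 h), a • m, ?_⟩
    simp only [Ideal.algebraMap_quotient_residueField_mk] at h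
    rw [TensorProduct.smul_tmul', Algebra.smul_def, mul_comm, h, TensorProduct.tmul_smul,
      TensorProduct.smul_tmul', Algebra.smul_def, mul_one]
  | add x y hx hy =>
    obtain ⟨u, hu, f, hf⟩ := hx
    obtain ⟨v, hv, g, hg⟩ := hy
    refine ⟨u * v, fun h => (hP.mem_or_mem h).elim hu hv, v • f + u • g, ?_⟩
    rw [TensorProduct.tmul_add, TensorProduct.tmul_smul, TensorProduct.tmul_smul, ← hf, ← hg]
    module

theorem residue_ker {R M : Type*} [CommRing R] [CommRing M] [Algebra R M] [Module.Flat R M]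
    (P : Ideal R) [hP : P.IsPrime] (m : M) :
    (1 : P.ResidueField) ⊗ₜ[R] m = 0 ↔ m ∈ P.map (algebraMap R M) := by
  have h1 := Module.Flat.rTensor_preserves_injective_linearMap (M := M)
    (IsScalarTower.toAlgHom R (R ⧸ P) P.ResidueField).toLinearMap
    P.injective_algebraMap_quotient_residueField
  have h2 : (1 : P.ResidueField) ⊗ₜ[R] m =
    LinearMap.rTensor M (IsScalarTower.toAlgHom R (R ⧸ P) P.ResidueField).toLinearMap
      ((1 : R ⧸ P) ⊗ₜ m) := by simp
  have h3 := TensorProduct.quotTensorEquivQuotSMul_mk_tmul (M := M) P 1 m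
  rw [map_one, one_smul] at h3
  rw [h2, map_eq_zero_iff _ h1, ← (TensorProduct.quotTensorEquivQuotSMul M P).map_eq_zero_iff, h3,
    Submodule.Quotient.mk_eq_zero, Ideal.smul_top_eq_map]
  rfl

theorem residue_reg {R M : Type*} [CommRing R] [AddCommGroup M] [Module R M]
    (P : Ideal R) [hP : P.IsPrime] (s : R) (hs : s ∉ P) (z : P.ResidueField ⊗[R] M)
    (h : s • z = 0) : z = 0 := by
  rw [← algebraMap_smul P.ResidueField s z] at h
  exact (smul_eq_zero.1 h).resolve_left fun h => hs (Ideal.algebraMap_residueField_eq_zero.1 h)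

/-- The elementary fibre condition extracted from the fibres. -/
theorem fibre_cond {R B A : Type*} [CommRing R] [CommRing B] [CommRing A]
    [Algebra R B] [Algebra R A] [Algebra B A] [IsScalarTower R B A] [Module.Flat R B]
    [Module.Flat R A] {d : ℕ} (h : FibersPolynomialOver R B A d) (P : Ideal R) (hP : P.IsPrime) :
    ∃ X : Fin d → A,
      (∀ a : A, ∃ s ∉ P, ∃ p : MvPolynomial (Fin d) B,
        s • a - MvPolynomial.aeval X p ∈ P.map (algebraMap R A)) ∧
      (∀ p : MvPolynomial (Fin d) B, MvPolynomial.aeval X p ∈ P.map (algebraMap R A) →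
        ∀ i, p.coeff i ∈ P.map (algebraMap R B)) := by
  have h1 := h P hP
  let f := (Algebra.TensorProduct.map (AlgHom.id R (ResidueFieldAt R P))
        (IsScalarTower.toAlgHom R B A))
  letI : Algebra (ResidueFieldAt R P ⊗[R] B) (ResidueFieldAt R P ⊗[R] A) := f.toRingHom.toAlgebra
  have : IsScalarTower R (ResidueFieldAt R P ⊗[R] B) (ResidueFieldAt R P ⊗[R] A) :=
    IsScalarTower.of_algebraMap_eq fun r => (f.commutes r).symm
  obtain ⟨φ⟩ := h1
  refine fibre_abstract P hP (Algebra.TensorProduct.includeRight (A := ResidueFieldAt R P))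
    (Algebra.TensorProduct.includeRight (A := ResidueFieldAt R P)) (fun b => ?_)
    (residue_lift P) (residue_lift P) (residue_ker P) (fun b hb => (residue_ker P b).1 hb)
    (fun s hs b' => residue_reg P s hs b') φ
  change f (1 ⊗ₜ b) = _
  simp [f]


theorem exists_dual {B' A' k : Type*} [CommRing B'] [CommRing A'] [CommRing k] [Algebra B' A']
    {d : ℕ} (φ : A' ≃ₐ[B'] MvPolynomial (Fin d) B') (π : A' →+* k) (g : B' →+* TrivSqZeroExt k k)
    (hg : ∀ b, (g b).fst = π (algebraMap B' A' b)) :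
    ∃ Φ : A' →+* TrivSqZeroExt k k, (∀ a, (Φ a).fst = π a) ∧ ∀ b, Φ (algebraMap B' A' b) = g b := by
  let Ψ : MvPolynomial (Fin d) B' →+* TrivSqZeroExt k k :=
    MvPolynomial.eval₂Hom g (fun i => TrivSqZeroExt.inl (π (φ.symm (MvPolynomial.X i))))
  refine ⟨Ψ.comp φ.toRingEquiv.toRingHom, fun a => ?_, fun b => ?_⟩
  · have h1 : (TrivSqZeroExt.fstHom k k k).toRingHom.comp Ψ =
        π.comp φ.symm.toRingEquiv.toRingHom := by
      apply MvPolynomial.ringHom_ext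
      · intro b
        have : φ.symm (MvPolynomial.C b) = algebraMap B' A' b := φ.symm.commutes b
        simp [Ψ, hg, this]
      · intro i
        simp [Ψ]
    have h2 := RingHom.congr_fun h1 (φ a)
    simpa using h2
  · have : φ (algebraMap B' A' b) = MvPolynomial.C b := φ.commutes b
    simp [Ψ]

/-- Derivations into the residue field `A/𝔪`. -/
theorem exists_derivation_residue {R A : Type*} [CommRing R] [CommRing A] [Algebra R A] {m d : ℕ}
    (W : Fin m → A) (hW : AlgebraicIndependent R W)
    (h : FibersPolynomialOver R (Algebra.adjoin R (Set.range W)) A d) (𝔪 : Ideal A)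
    (hm : 𝔪.IsMaximal) (i : Fin m) :
    ∃ D : Derivation R A (A ⧸ 𝔪), ∀ j, D (W j) = if i = j then 1 else 0 := by
  let P : Ideal R := 𝔪.comap (algebraMap R A)
  have hP : P.IsPrime := Ideal.comap_isPrime _ _
  have h1 := h P hP
  let f := (Algebra.TensorProduct.map (AlgHom.id R (ResidueFieldAt R P))
        (IsScalarTower.toAlgHom R (Algebra.adjoin R (Set.range W)) A))
  let _ : Algebra (ResidueFieldAt R P ⊗[R] (Algebra.adjoin R (Set.range W)))
    (ResidueFieldAt R P ⊗[R] A) := f.toRingHom.toAlgebra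
  obtain ⟨φ⟩ := h1
  have hunit : ∀ x : A, x ∉ 𝔪 → IsUnit (Ideal.Quotient.mk 𝔪 x) := by
    intro x hx
    obtain ⟨y, hy⟩ := Ideal.Quotient.exists_inv (I := 𝔪) (a := Ideal.Quotient.mk 𝔪 x)
      (fun h0 => hx (Ideal.Quotient.eq_zero_iff_mem.1 h0))
    exact IsUnit.of_mul_eq_one _ hy
  let κk : ResidueFieldAt R P →ₐ[R] (A ⧸ 𝔪) :=
    Ideal.ResidueField.liftₐ P (Algebra.ofId R (A ⧸ 𝔪))
      (by
        intro x hx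
        exact Ideal.Quotient.eq_zero_iff_mem.2 hx)
      (by
        intro x hx
        exact hunit (algebraMap R A x) hx)
  let π : ResidueFieldAt R P ⊗[R] A →ₐ[R] (A ⧸ 𝔪) :=
    Algebra.TensorProduct.lift κk (Ideal.Quotient.mkₐ R 𝔪) (fun _ _ => mul_comm _ _)
  let g0 : MvPolynomial (Fin m) R →ₐ[R] TrivSqZeroExt (A ⧸ 𝔪) (A ⧸ 𝔪) :=
    MvPolynomial.aeval (fun j => TrivSqZeroExt.inl (Ideal.Quotient.mk 𝔪 (W j)) +
      TrivSqZeroExt.inr (if i = j then 1 else 0))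
  let g : ResidueFieldAt R P ⊗[R] (Algebra.adjoin R (Set.range W)) →ₐ[R]
      TrivSqZeroExt (A ⧸ 𝔪) (A ⧸ 𝔪) :=
    Algebra.TensorProduct.lift ((TrivSqZeroExt.inlAlgHom R (A ⧸ 𝔪) (A ⧸ 𝔪)).comp κk)
      (g0.comp hW.aevalEquiv.symm.toAlgHom) (fun _ _ => mul_comm _ _)
  have hgt : ∀ a b, g (a ⊗ₜ b) = TrivSqZeroExt.inl (κk a) * g0 (hW.aevalEquiv.symm b) :=
    fun a b => Algebra.TensorProduct.lift_tmul _ _ _ a b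
  have hπt : ∀ a b, π (a ⊗ₜ b) = κk a * Ideal.Quotient.mk 𝔪 b :=
    fun a b => Algebra.TensorProduct.lift_tmul _ _ _ a b
  have hft : ∀ a b, f (a ⊗ₜ b) = a ⊗ₜ (b : A) :=
    fun a b => Algebra.TensorProduct.map_tmul _ _ a b
  have hg0 : ∀ b, (g0 (hW.aevalEquiv.symm b)).fst = Ideal.Quotient.mk 𝔪 (b : A) := by
    intro b
    obtain ⟨p, rfl⟩ := hW.aevalEquiv.surjective b
    rw [AlgEquiv.symm_apply_apply]
    have h2 : (TrivSqZeroExt.fstHom R (A ⧸ 𝔪) (A ⧸ 𝔪)).comp g0 =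
        (Ideal.Quotient.mkₐ R 𝔪).comp (MvPolynomial.aeval W) := by
      apply MvPolynomial.algHom_ext
      intro j
      simp only [g0, AlgHom.comp_apply, MvPolynomial.aeval_X, map_add, TrivSqZeroExt.fstHom_apply,
        TrivSqZeroExt.fst_inl, TrivSqZeroExt.fst_inr, add_zero]
      rfl
    have h3 := AlgHom.congr_fun h2 p
    have h4 : ((hW.aevalEquiv p : Algebra.adjoin R (Set.range W)) : A) = MvPolynomial.aeval W p :=
      hW.algebraMap_aevalEquiv p
    rw [h4]
    simpa using h3
  have hg : (TrivSqZeroExt.fstHom R (A ⧸ 𝔪) (A ⧸ 𝔪)).comp g = π.comp f := by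
    apply Algebra.TensorProduct.ext'
    intro a b
    rw [AlgHom.comp_apply, AlgHom.comp_apply, hgt, hft, hπt, map_mul]
    simp only [TrivSqZeroExt.fstHom_apply, TrivSqZeroExt.fst_inl, hg0]
  obtain ⟨Φ, hΦ1, hΦ2⟩ := exists_dual φ π.toRingHom g.toRingHom
    (fun b => AlgHom.congr_fun hg b)
  have hmk : ∀ a : A, (Φ (1 ⊗ₜ a)).fst = Ideal.Quotient.mk 𝔪 a := by
    intro a
    rw [hΦ1]
    change π (1 ⊗ₜ a) = _
    rw [hπt, map_one, one_mul]
  have hR : ∀ r : R, Φ (1 ⊗ₜ algebraMap R A r) = algebraMap R _ r := by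
    intro r
    have h2 : (1 : ResidueFieldAt R P) ⊗ₜ[R] algebraMap R A r =
      algebraMap (ResidueFieldAt R P ⊗[R] (Algebra.adjoin R (Set.range W))) _ (algebraMap R _ r) := by
      change _ = f (algebraMap R _ r)
      rw [f.commutes, Algebra.TensorProduct.algebraMap_apply, Algebra.algebraMap_eq_smul_one,
        Algebra.algebraMap_eq_smul_one, TensorProduct.tmul_smul, TensorProduct.smul_tmul']
    rw [h2, hΦ2]
    exact g.commutes r
  have hmul : ∀ a b : A, Φ (1 ⊗ₜ (a * b)) = Φ (1 ⊗ₜ a) * Φ (1 ⊗ₜ b) := by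
    intro a b
    rw [← map_mul, Algebra.TensorProduct.tmul_mul_tmul, one_mul]
  let D0 : A →ₗ[R] (A ⧸ 𝔪) :=
    { toFun := fun a => (Φ (1 ⊗ₜ a)).snd
      map_add' := fun a b => by rw [TensorProduct.tmul_add, map_add, TrivSqZeroExt.snd_add]
      map_smul' := fun r a => by
        rw [Algebra.smul_def, hmul, hR, ← Algebra.smul_def, TrivSqZeroExt.snd_smul]; rfl }
  refine ⟨Derivation.mk' D0 fun a b => ?_, fun j => ?_⟩
  · change (Φ (1 ⊗ₜ (a * b))).snd = a • (Φ (1 ⊗ₜ b)).snd + b • (Φ (1 ⊗ₜ a)).snd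
    rw [hmul, TrivSqZeroExt.snd_mul, hmk, hmk, Algebra.smul_def, Algebra.smul_def]
    rw [op_smul_eq_smul]
    rfl
  · change (Φ (1 ⊗ₜ W j)).snd = _
    have h2 : (1 : ResidueFieldAt R P) ⊗ₜ[R] W j =
      algebraMap (ResidueFieldAt R P ⊗[R] (Algebra.adjoin R (Set.range W))) _
        (1 ⊗ₜ hW.aevalEquiv (MvPolynomial.X j)) := by
      change _ = f _
      simp only [f, Algebra.TensorProduct.map_tmul, map_one]
      congr 1
      exact ((hW.algebraMap_aevalEquiv _).trans (MvPolynomial.aeval_X _ _)).symm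
    rw [h2, hΦ2]
    change (g _).snd = _
    rw [hgt, map_one, TrivSqZeroExt.inl_one, one_mul, AlgEquiv.symm_apply_apply,
      MvPolynomial.aeval_X, TrivSqZeroExt.snd_add,
      TrivSqZeroExt.snd_inl, TrivSqZeroExt.snd_inr, zero_add]



/-- dual vectors to `dW` -/
theorem exists_dual_vectors {A M : Type*} [CommRing A] [AddCommGroup M] [Module A M]
    [Module.Projective A M] {m : ℕ} (w : Fin m → M)
    (h : ∀ (𝔪 : Ideal A), 𝔪.IsMaximal → ∀ i, ∃ D : M →ₗ[A] (A ⧸ 𝔪),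
      ∀ j, D (w j) = if i = j then 1 else 0) :
    ∃ l : Fin m → (M →ₗ[A] A), ∀ i j, l i (w j) = if i = j then 1 else 0 := by
  classical
  let J : Ideal A :=
    { carrier := {a | ∀ i, ∃ l : M →ₗ[A] A, ∀ j, l (w j) = if i = j then a else 0}
      add_mem' := by
        intro a b ha hb i
        obtain ⟨l, hl⟩ := ha i
        obtain ⟨k, hk⟩ := hb i
        refine ⟨l + k, fun j => ?_⟩
        rw [LinearMap.add_apply, hl, hk]
        split_ifs <;> simp
      zero_mem' := fun i => ⟨0, fun j => by simp⟩
      smul_mem' := by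
        intro c a ha i
        obtain ⟨l, hl⟩ := ha i
        refine ⟨c • l, fun j => ?_⟩
        rw [LinearMap.smul_apply, hl]
        split_ifs <;> simp }
  have hJ : J = ⊤ := by
    by_contra hne
    obtain ⟨𝔪, hm, hle⟩ := Ideal.exists_le_maximal J hne
    choose D hD using h 𝔪 hm
    choose E hE using fun i => Module.projective_lifting_property (𝔪.mkQ) (D i)
      (Submodule.mkQ_surjective 𝔪)
    let G : Matrix (Fin m) (Fin m) A := Matrix.of fun i j => E i (w j)
    have hG : (Ideal.Quotient.mk 𝔪) G.det = 1 := by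
      rw [RingHom.map_det]
      have : (Ideal.Quotient.mk 𝔪).mapMatrix G = 1 := by
        ext i j
        have h1 : Ideal.Quotient.mk 𝔪 (E i (w j)) = D i (w j) := LinearMap.congr_fun (hE i) (w j)
        rw [RingHom.mapMatrix_apply, Matrix.map_apply, Matrix.one_apply]
        exact h1.trans (hD i j)
      rw [this, Matrix.det_one]
    have hdet : G.det ∈ J := by
      intro i
      refine ⟨∑ k, G.adjugate i k • E k, fun j => ?_⟩
      have h1 := congrFun (congrFun G.adjugate_mul i) j
      rw [Matrix.mul_apply, Matrix.smul_apply, Matrix.one_apply] at h1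
      rw [LinearMap.sum_apply]
      simp only [LinearMap.smul_apply]
      rw [show ∑ k, G.adjugate i k • (E k) (w j) = ∑ k, G.adjugate i k * G k j from rfl, h1]
      split_ifs <;> simp
    have h0 := Ideal.Quotient.eq_zero_iff_mem.2 (hle hdet)
    rw [hG] at h0
    exact hm.ne_top ((Ideal.eq_top_iff_one _).2 (Ideal.Quotient.eq_zero_iff_mem.1 (by simpa using h0)))
  have h1 : (1 : A) ∈ J := by rw [hJ]; trivial
  choose l hl using h1
  exact ⟨l, hl⟩

theorem ker_map_le_span {R A : Type*} [CommRing R] [CommRing A] [Algebra R A] {m : ℕ}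
    (W : Fin m → A) (x : Ω[A⁄R])
    (hx : KaehlerDifferential.map R (Algebra.adjoin R (Set.range W)) A A x = 0) :
    x ∈ Submodule.span A (Set.range fun j => KaehlerDifferential.D R A (W j)) := by
  let B := Algebra.adjoin R (Set.range W)
  let S := Submodule.span A (Set.range fun j => KaehlerDifferential.D R A (W j))
  have hx' : x ∈ (KaehlerDifferential.mapBaseChange R B A).range := by
    rw [KaehlerDifferential.range_mapBaseChange]
    exact hx
  clear hx
  obtain ⟨z, rfl⟩ := hx'
  have hD : ∀ b ∈ Algebra.adjoin R (Set.range W), KaehlerDifferential.D R A b ∈ S := by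
    intro b hb
    induction hb using Algebra.adjoin_induction with
    | mem x hx =>
      obtain ⟨j, rfl⟩ := hx
      exact Submodule.subset_span ⟨j, rfl⟩
    | algebraMap r => rw [Derivation.map_algebraMap]; exact zero_mem _
    | add x y _ _ hx hy => rw [map_add]; exact add_mem hx hy
    | mul x y _ _ hx hy =>
      rw [Derivation.leibniz]
      exact add_mem (Submodule.smul_mem _ _ hy) (Submodule.smul_mem _ _ hx)
  induction z using TensorProduct.induction_on with
  | zero => rw [map_zero]; exact zero_mem _
  | add x y hx hy =>
    rw [map_add]
    exact add_mem hx hy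
  | tmul a y =>
    rw [KaehlerDifferential.mapBaseChange_tmul]
    refine Submodule.smul_mem _ _ ?_
    have hy : y ∈ Submodule.span B (Set.range (KaehlerDifferential.D R B)) := by
      rw [KaehlerDifferential.span_range_derivation]; trivial
    induction hy using Submodule.span_induction with
    | mem y hy =>
      obtain ⟨b, rfl⟩ := hy
      rw [KaehlerDifferential.map_D]
      exact hD _ b.2
    | zero => rw [map_zero]; exact zero_mem _
    | add x y _ _ hx hy =>
      rw [map_add]
      exact add_mem hx hy
    | smul c x _ hx =>
      rw [map_smul, ← algebraMap_smul A c]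
      exact Submodule.smul_mem _ _ hx

/-- splitting off the `dW` -/
theorem stable_relative {R A : Type*} [CommRing R] [CommRing A] [Algebra R A] {m d : ℕ}
    (W : Fin m → A) (hW : AlgebraicIndependent R W)
    (h : FibersPolynomialOver R (Algebra.adjoin R (Set.range W)) A d)
    (hs : IsStablyFree A (Ω[A⁄R])) :
    ∃ N c : ℕ, Nonempty ((Ω[A⁄Algebra.adjoin R (Set.range W)] × (Fin N → A)) ≃ₗ[A] (Fin c → A)) := by
  classical
  obtain ⟨s, t, ⟨e⟩⟩ := hs
  have hp1 : Module.Projective A (Ω[A⁄R] × (Fin s → A)) := Module.Projective.of_equiv e.symm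
  have hp : Module.Projective A (Ω[A⁄R]) :=
    Module.Projective.of_split (LinearMap.inl A (Ω[A⁄R]) (Fin s → A))
      (LinearMap.fst A (Ω[A⁄R]) (Fin s → A)) (LinearMap.ext fun x => rfl)
  obtain ⟨l, hl⟩ := exists_dual_vectors (fun j => KaehlerDifferential.D R A (W j)) (by
    intro 𝔪 hm i
    obtain ⟨D, hD⟩ := exists_derivation_residue W hW h 𝔪 hm i
    refine ⟨D.liftKaehlerDifferential, fun j => ?_⟩
    rw [Derivation.liftKaehlerDifferential_comp_D]
    exact hD j)
  let q := KaehlerDifferential.map R (Algebra.adjoin R (Set.range W)) A A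
  have hq : Function.Surjective q := KaehlerDifferential.map_surjective R _ A
  have hqW : ∀ j, q (KaehlerDifferential.D R A (W j)) = 0 := by
    intro j
    rw [KaehlerDifferential.map_D]
    have : algebraMap A A (W j) = algebraMap (Algebra.adjoin R (Set.range W)) A
      ⟨W j, Algebra.subset_adjoin ⟨j, rfl⟩⟩ := rfl
    rw [this, Derivation.map_algebraMap]
  let F : Ω[A⁄R] →ₗ[A] Ω[A⁄Algebra.adjoin R (Set.range W)] × (Fin m → A) :=
    LinearMap.prod q (LinearMap.pi l)
  have hF : Function.Bijective F := by
    constructor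
    · rw [injective_iff_map_eq_zero]
      intro x hx
      have h1 : q x = 0 := congrArg Prod.fst hx
      have h2 : ∀ i, l i x = 0 := fun i => congrFun (congrArg Prod.snd hx) i
      obtain ⟨c, rfl⟩ := (Submodule.mem_span_range_iff_exists_fun A).1 (ker_map_le_span W x h1)
      refine Finset.sum_eq_zero fun i _ => ?_
      have := h2 i
      rw [map_sum] at this
      simp only [map_smul, hl, smul_eq_mul, mul_ite, mul_one, mul_zero, Finset.sum_ite_eq,
        Finset.mem_univ, if_true] at this
      rw [this, zero_smul]
    · rintro ⟨k, v⟩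
      obtain ⟨x, rfl⟩ := hq k
      refine ⟨x + ∑ j, (v j - l j x) • KaehlerDifferential.D R A (W j), Prod.ext ?_ ?_⟩
      · change q _ = _
        simp only [map_add, map_sum, map_smul, hqW, smul_zero, Finset.sum_const_zero, add_zero]
      · funext i
        change l i _ = _
        simp only [map_add, map_sum, map_smul, hl, smul_eq_mul, mul_ite, mul_one, mul_zero,
          Finset.sum_ite_eq, Finset.mem_univ, if_true]
        ring
  let e1 := LinearEquiv.ofBijective F hF
  let e2 : (Fin (m + s) → A) ≃ₗ[A] (Fin m → A) × (Fin s → A) :=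
    (LinearEquiv.funCongrLeft A A finSumFinEquiv).trans
      (LinearEquiv.sumArrowLequivProdArrow (Fin m) (Fin s) A A)
  let K := Ω[A⁄Algebra.adjoin R (Set.range W)]
  let e3 : (K × (Fin (m + s) → A)) ≃ₗ[A] K × ((Fin m → A) × (Fin s → A)) :=
    LinearEquiv.prodCongr (LinearEquiv.refl A K) e2
  let e4 : ((K × (Fin m → A)) × (Fin s → A)) ≃ₗ[A] K × ((Fin m → A) × (Fin s → A)) :=
    LinearEquiv.prodAssoc A K (Fin m → A) (Fin s → A)
  let e5 : (Ω[A⁄R] × (Fin s → A)) ≃ₗ[A] ((K × (Fin m → A)) × (Fin s → A)) :=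
    LinearEquiv.prodCongr e1 (LinearEquiv.refl A _)
  exact ⟨m + s, t, ⟨e3.trans (e4.symm.trans (e5.symm.trans e))⟩⟩


theorem kaehler_basis_of_algEquiv {R S T : Type*} [CommRing R] [CommRing S] [CommRing T]
    [Algebra R S] [Algebra R T] (e : S ≃ₐ[R] T) {ι : Type*}
    (b : Module.Basis ι S (Ω[S⁄R])) : Nonempty (Module.Basis ι T (Ω[T⁄R])) := by
  letI : Algebra S T := e.toRingHom.toAlgebra
  have : IsScalarTower R S T := IsScalarTower.of_algebraMap_eq fun x => (e.commutes x).symm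
  have : Algebra.IsPushout R R S T :=
    (Algebra.IsPushout.of_bijective_right (R := R) (A := S) (T := T) e.bijective).symm
  exact ⟨(b.baseChange T).map (KaehlerDifferential.tensorKaehlerEquiv R R S T)⟩

theorem stablyFree_of_stablyPoly {R A : Type*} [CommRing R] [CommRing A] [Algebra R A]
    {r k : ℕ} (b : Module.Basis (Fin k) (MvPolynomial (Fin r) A)
      (Ω[MvPolynomial (Fin r) A⁄R])) : IsStablyFree A (Ω[A⁄R]) := by
  obtain ⟨f⟩ := kaehler_mvPoly_equiv R A r
  let T := MvPolynomial (Fin r) A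
  let g : ((T ⊗[A] Ω[A⁄R]) × (Fin r → T)) ≃ₗ[T] (Fin k → T) := f.symm.trans b.equivFun
  letI : Algebra T A := (MvPolynomial.aeval (fun _ => (0 : A)) : T →ₐ[A] A).toRingHom.toAlgebra
  have : IsScalarTower A T A := IsScalarTower.of_algebraMap_eq fun x =>
    ((MvPolynomial.aeval (fun _ => (0 : A)) : T →ₐ[A] A).commutes x).symm
  let e1 := g.baseChange T A _ _
  let e2 : A ⊗[T] ((T ⊗[A] Ω[A⁄R]) × (Fin r → T)) ≃ₗ[A]
      (A ⊗[T] (T ⊗[A] Ω[A⁄R])) × (A ⊗[T] (Fin r → T)) := TensorProduct.prodRight T A A _ _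
  let e3 : A ⊗[T] (T ⊗[A] Ω[A⁄R]) ≃ₗ[A] Ω[A⁄R] :=
    (TensorProduct.AlgebraTensorModule.cancelBaseChange A T A A (Ω[A⁄R])).trans
      (TensorProduct.lid A _)
  let e4 := TensorProduct.piScalarRight T A A (Fin r)
  let e5 := TensorProduct.piScalarRight T A A (Fin k)
  exact ⟨r, k, ⟨(LinearEquiv.prodCongr e3 e4).symm.trans (e2.symm.trans (e1.trans e5))⟩⟩

/-- (Main theorem, equivalence form.)  Let `R` be a Noetherian domain, `A` an
`𝔸ⁿ`-fibration over `R` and `W` an `m`-tuple residual variable of `A` over `R`, with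
`B = R[W]`.  Then `Ω_R(A)` is a stably free `A`-module if and only if `A` is a stably
polynomial algebra over `B`. -/
theorem stablyFree_kaehler_iff_stablyPolynomial
    (R A : Type*) [CommRing R] [IsDomain R] [IsNoetherianRing R]
    [CommRing A] [Algebra R A]
    (n m : ℕ) (hA : IsAffineFibration R A n)
    (W : Fin m → A) (hW : IsResidualVariable R A n m W) :
    IsStablyFree A (KaehlerDifferential R A) ↔
      ∃ r s : ℕ,
        Nonempty (MvPolynomial (Fin r) A ≃ₐ[↥(Algebra.adjoin R (Set.range W))]
          MvPolynomial (Fin s) ↥(Algebra.adjoin R (Set.range W))) := by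
  obtain ⟨hft, hfl, -⟩ := hA
  obtain ⟨hind, hfib⟩ := hW
  let B := Algebra.adjoin R (Set.range W)
  let ew : MvPolynomial (Fin m) R ≃ₐ[R] B := hind.aevalEquiv
  constructor
  · intro hs
    have : IsNoetherianRing B := isNoetherianRing_of_ringEquiv _ ew.toRingEquiv
    have : Module.Flat R B := Module.Flat.of_linearEquiv ew.symm.toLinearEquiv
    have : Algebra.FiniteType B A := Algebra.FiniteType.of_restrictScalars_finiteType R B A
    obtain ⟨N, c, ⟨e⟩⟩ := stable_relative W hind hfib hs
    exact main_equiv e (fun P hP => fibre_cond hfib P hP)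
  · rintro ⟨r, s, ⟨e⟩⟩
    let e1 : MvPolynomial (Fin r) A ≃ₐ[R] MvPolynomial (Fin s) B := e.restrictScalars R
    let e2 : MvPolynomial (Fin s) (MvPolynomial (Fin m) R) ≃ₐ[R] MvPolynomial (Fin s) B :=
      MvPolynomial.mapAlgEquiv (Fin s) ew
    let e3 : MvPolynomial (Fin (s + m)) R ≃ₐ[R] MvPolynomial (Fin s) (MvPolynomial (Fin m) R) :=
      nestEquiv R s m
    obtain ⟨b⟩ := kaehler_basis_of_algEquiv (e3.trans (e2.trans e1.symm))
      (KaehlerDifferential.mvPolynomialBasis R (Fin (s + m)))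
    exact stablyFree_of_stablyPoly b
end

section
/- Let R be a Noetherian domain and M a finitely generated projective R-module of constant rank r ≥ 1 which is not stably free. Let A = Sym_R(M ⊕ R), the symmetric algebra of M ⊕ R over R, and let W ∈ A be the degree-one element corresponding to the generator 1 of the free summand R. Then: (i) A is an 𝔸^{r+1}-fibration over R; (ii) W is a residual variable of A over R; and (iii) A is not a stably polynomial algebra over R[W], i.e., there is no ℓ ∈ ℕ with A[Z₁,…,Z_ℓ] isomorphic as an R[W]-algebra to a polynomial ring in ℓ + r variables over R[W]. -/
open TensorProduct

universe u v w

/-- `A`, together with the `R`-linear map `φ : M →ₗ[R] A`, is a symmetric algebra of the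
`R`-module `M`: every `R`-linear map from `M` to a commutative `R`-algebra factors
uniquely through an `R`-algebra homomorphism from `A`. -/
def IsSymAlgebra (R : Type u) (M : Type v) (A : Type w)
    [CommRing R] [AddCommGroup M] [Module R M]
    [CommRing A] [Algebra R A] (φ : M →ₗ[R] A) : Prop :=
  ∀ (C : Type (max u v w)) [CommRing C] [Algebra R C] (f : M →ₗ[R] C),
    ∃! g : A →ₐ[R] C, ∀ x : M, g (φ x) = f x


lemma IsSymAlgebra.isSymmetricAlgebra {R : Type u} {M : Type v} {A : Type w}
    [CommRing R] [AddCommGroup M] [Module R M]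
    [CommRing A] [Algebra R A] {φ : M →ₗ[R] A} (hφ : IsSymAlgebra R M A φ) :
    IsSymmetricAlgebra φ := by
  let C := ULift.{max u v w} (SymmetricAlgebra R M)
  let D := ULift.{max u v w} A
  let eC : C ≃ₐ[R] SymmetricAlgebra R M := ULift.algEquiv
  let eD : D ≃ₐ[R] A := ULift.algEquiv
  obtain ⟨g, hg, -⟩ := hφ C (eC.symm.toLinearMap ∘ₗ SymmetricAlgebra.ι R M)
  obtain ⟨g', hg', hu⟩ := hφ D (eD.symm.toLinearMap ∘ₗ φ)
  let G : A →ₐ[R] SymmetricAlgebra R M := eC.toAlgHom.comp g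
  have hG : ∀ x, G (φ x) = SymmetricAlgebra.ι R M x := by
    intro x
    change eC (g (φ x)) = _
    rw [hg]
    exact eC.apply_symm_apply _
  have h1 : ∀ a, G (SymmetricAlgebra.lift φ a) = a := by
    intro a
    have : G.comp (SymmetricAlgebra.lift φ) = AlgHom.id R _ := by
      apply SymmetricAlgebra.algHom_ext
      ext x
      simp [hG]
    exact congrArg (fun f : _ →ₐ[R] _ => f a) this
  have h2 : ∀ a, SymmetricAlgebra.lift φ (G a) = a := by
    intro a
    have e1 := hu (eD.symm.toAlgHom.comp ((SymmetricAlgebra.lift φ).comp G)) (by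
      intro x
      change eD.symm (SymmetricAlgebra.lift φ (G (φ x))) = eD.symm (φ x)
      rw [hG, SymmetricAlgebra.lift_ι_apply])
    have e2 := hu eD.symm.toAlgHom (fun x => rfl)
    have e3 := congrArg (fun f : A →ₐ[R] D => f a) (e1.trans e2.symm)
    exact eD.symm.injective e3
  exact ⟨Function.LeftInverse.injective h1, Function.RightInverse.surjective h2⟩

lemma symAlg_retract {R M A : Type*} [CommRing R] [AddCommGroup M] [Module R M]
    [Module.Finite R M] [Module.Projective R M] [CommRing A] [Algebra R A] {φ : M →ₗ[R] A}
    (h : IsSymmetricAlgebra φ) :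
    ∃ (n : ℕ) (i : A →ₐ[R] MvPolynomial (Fin n) R) (p : MvPolynomial (Fin n) R →ₐ[R] A),
      p.comp i = AlgHom.id R A := by
  obtain ⟨n, f, hf⟩ := Module.Finite.exists_fin' R M
  obtain ⟨s, hs⟩ := Module.projective_lifting_property f LinearMap.id hf
  let b := Pi.basisFun R (Fin n)
  refine ⟨n, h.lift ((b.constr R (.X : Fin n → MvPolynomial (Fin n) R)) ∘ₗ s),
    MvPolynomial.aeval (fun i => φ (f (b i))), ?_⟩
  apply h.algHom_ext
  have key : (MvPolynomial.aeval (R := R) (fun i => φ (f (b i)))).toLinearMap ∘ₗ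
      (b.constr R (.X : Fin n → MvPolynomial (Fin n) R)) = φ ∘ₗ f := by
    apply b.ext
    intro i
    simp [-Pi.basisFun_apply]
  ext x
  have := congrArg (fun g : _ →ₗ[R] _ => g (s x)) key
  have hx : f (s x) = x := congrArg (fun g : _ →ₗ[R] _ => g x) hs
  simp only [LinearMap.comp_apply, hx] at this
  simpa using this

lemma symAlg_baseChange {R M A : Type*} [CommRing R] [AddCommGroup M] [Module R M]
    [CommRing A] [Algebra R A] {φ : M →ₗ[R] A}
    (h : IsSymmetricAlgebra φ) (K : Type*) [CommRing K] [Algebra R K] :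
    IsSymmetricAlgebra (φ.baseChange K : K ⊗[R] M →ₗ[K] K ⊗[R] A) := by
  let j : M →ₗ[R] SymmetricAlgebra K (K ⊗[R] M) :=
    (SymmetricAlgebra.ι K (K ⊗[R] M)).restrictScalars R ∘ₗ TensorProduct.mk R K M 1
  let G : K ⊗[R] A →ₐ[K] SymmetricAlgebra K (K ⊗[R] M) :=
    Algebra.TensorProduct.lift (Algebra.ofId K _) (h.lift j) (fun _ _ => Commute.all _ _)
  have hG : ∀ m, G (1 ⊗ₜ φ m) = SymmetricAlgebra.ι K (K ⊗[R] M) (1 ⊗ₜ m) := by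
    intro m
    simp [G, j]
  have h1 : G.comp (SymmetricAlgebra.lift (φ.baseChange K)) = AlgHom.id K _ := by
    apply SymmetricAlgebra.algHom_ext
    apply TensorProduct.AlgebraTensorModule.ext
    intro k m
    have : (k ⊗ₜ[R] m : K ⊗[R] M) = k • (1 ⊗ₜ m) := by simp [TensorProduct.smul_tmul']
    rw [this]
    simp only [map_smul]
    congr 1
    simp [hG]
  have h2 : (SymmetricAlgebra.lift (φ.baseChange K)).comp G = AlgHom.id K _ := by
    apply Algebra.TensorProduct.ext
    · ext
    · apply h.algHom_ext
      ext m
      simp [hG]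
  exact ⟨Function.LeftInverse.injective (g := G) fun a => congrArg (fun f : _ →ₐ[K] _ => f a) h1,
    Function.RightInverse.surjective (g := G) fun a => congrArg (fun f : _ →ₐ[K] _ => f a) h2⟩

lemma symAlg_comp_equiv {R M N A : Type*} [CommRing R] [AddCommGroup M] [Module R M]
    [AddCommGroup N] [Module R N]
    [CommRing A] [Algebra R A] {φ : M →ₗ[R] A}
    (h : IsSymmetricAlgebra φ) (e : N ≃ₗ[R] M) :
    IsSymmetricAlgebra (φ ∘ₗ e.toLinearMap) := by
  let G : A →ₐ[R] SymmetricAlgebra R N := h.lift (SymmetricAlgebra.ι R N ∘ₗ e.symm.toLinearMap)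
  have h1 : G.comp (SymmetricAlgebra.lift (φ ∘ₗ e.toLinearMap)) = AlgHom.id R _ := by
    apply SymmetricAlgebra.algHom_ext
    ext x
    simp [G]
  have h2 : (SymmetricAlgebra.lift (φ ∘ₗ e.toLinearMap)).comp G = AlgHom.id R _ := by
    apply h.algHom_ext
    ext x
    simp [G]
  exact ⟨Function.LeftInverse.injective (g := G) fun a => congrArg (fun f : _ →ₐ[R] _ => f a) h1,
    Function.RightInverse.surjective (g := G) fun a => congrArg (fun f : _ →ₐ[R] _ => f a) h2⟩

lemma symAlg_equivOver {K V A B : Type*} [CommRing K] [AddCommGroup V] [Module K V]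
    [CommRing A] [Algebra K A] [CommRing B] [Algebra K B] [Algebra B A] [IsScalarTower K B A]
    {ψ : (V × K) →ₗ[K] A} (h : IsSymmetricAlgebra ψ) {n : ℕ} (b : Module.Basis (Fin n) K V)
    (w : B) (hw : algebraMap B A w = ψ (0, 1)) (hB : Algebra.adjoin K {w} = ⊤) :
    Nonempty (A ≃ₐ[B] MvPolynomial (Fin n) B) := by
  let F : A →ₐ[K] MvPolynomial (Fin n) B :=
    h.lift (LinearMap.coprod (b.constr K (.X : Fin n → MvPolynomial (Fin n) B))
      (LinearMap.toSpanSingleton K _ (MvPolynomial.C w)))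
  have hFb : ∀ i, F (ψ (b i, 0)) = MvPolynomial.X i := by
    intro i; simp [F]
  have hFw : F (ψ (0, 1)) = MvPolynomial.C w := by simp [F]
  have hF : F.comp (IsScalarTower.toAlgHom K B A) = IsScalarTower.toAlgHom K B _ := by
    apply AlgHom.ext_of_adjoin_eq_top hB
    rintro x rfl
    simp [hw, hFw]
  let F' : A →ₐ[B] MvPolynomial (Fin n) B :=
    { F.toRingHom with commutes' := fun x => congrArg (fun f : _ →ₐ[K] _ => f x) hF }
  have hF' : ∀ a, F' a = F a := fun _ => rfl
  let G : MvPolynomial (Fin n) B →ₐ[B] A := MvPolynomial.aeval (fun i => ψ (b i, 0))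
  refine ⟨AlgEquiv.ofAlgHom F' G ?_ ?_⟩
  · apply MvPolynomial.algHom_ext
    intro i
    simp [G, hF', hFb]
  · have : (G.restrictScalars K).comp F = AlgHom.id K A := by
      apply h.algHom_ext
      apply LinearMap.prod_ext
      · apply b.ext
        intro i
        simp [hFb, G]
      · ext
        simp [hFw, G, hw]
    ext a
    exact congrArg (fun f : _ →ₐ[K] _ => f a) this

lemma fiber_basis {R M : Type*} [CommRing R] [AddCommGroup M] [Module R M] [Module.Finite R M]
    [Module.Projective R M] {r : ℕ} (P : Ideal R) [P.IsPrime]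
    (hrank : Module.finrank (Localization.AtPrime P) (LocalizedModule P.primeCompl M) = r) :
    Nonempty (Module.Basis (Fin r) (ResidueFieldAt R P) (ResidueFieldAt R P ⊗[R] M)) := by
  have h1 := Module.rankAtStalk_eq_finrank_tensorProduct (M := M) ⟨P, inferInstance⟩
  have h2 : Module.rankAtStalk M ⟨P, inferInstance⟩ = r := hrank
  rw [h2] at h1
  have : Module.Free (Localization.AtPrime P) (Localization.AtPrime P ⊗[R] M) :=
    Module.free_of_flat_of_isLocalRing
  have h3 := Module.finrank_baseChange (R := ResidueFieldAt R P) (S := Localization.AtPrime P)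
    (M' := Localization.AtPrime P ⊗[R] M)
  have h4 := (TensorProduct.AlgebraTensorModule.cancelBaseChange R (Localization.AtPrime P)
    (ResidueFieldAt R P) (ResidueFieldAt R P) M).finrank_eq
  exact ⟨Module.finBasisOfFinrankEq _ _ (h4.symm.trans (h3.trans h1.symm))⟩

lemma adjoin_coe_singleton_eq_top {R A : Type*} [CommRing R] [CommRing A] [Algebra R A]
    {s : Set A} (w : Algebra.adjoin R s) (hs : s = {(w : A)}) : Algebra.adjoin R {w} = ⊤ := by
  rw [← Algebra.adjoin_adjoin_coe_preimage (R := R) (s := s)]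
  congr 1
  ext y
  change _ ↔ (y : A) ∈ s
  have h2 : (y : A) ∈ s ↔ (y : A) = w :=
    ⟨fun h => Set.mem_singleton_iff.1 (hs.subset h),
      fun h => hs.symm.subset (Set.mem_singleton_iff.2 h)⟩
  rw [h2, Set.mem_singleton_iff, Subtype.ext_iff]

lemma leibniz_of_dualNumber {R P : Type*} [CommRing R] [CommRing P] [Algebra R P]
    (g : P →ₐ[R] DualNumber R) (ε : P →ₐ[R] R) (hg : ∀ x, (g x).fst = ε x) (x y : P) :
    (g (x * y)).snd = ε x * (g y).snd + ε y * (g x).snd := by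
  rw [map_mul, TrivSqZeroExt.snd_mul, hg, hg, smul_eq_mul, MulOpposite.smul_eq_mul_unop, MulOpposite.unop_op,
    mul_comm (ε y)]

lemma dual_equiv_of_stablyPolynomial {R M A B : Type*} [CommRing R] [AddCommGroup M] [Module R M]
    [CommRing A] [Algebra R A] [CommRing B] [Algebra R B] [Algebra B A] [IsScalarTower R B A]
    {φ : (M × R) →ₗ[R] A} (h : IsSymmetricAlgebra φ)
    (w : B) (hw : algebraMap B A w = φ (0, 1)) (hB : Algebra.adjoin R {w} = ⊤) {l t : ℕ}
    (e : MvPolynomial (Fin l) A ≃ₐ[B] MvPolynomial (Fin t) B) :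
    Nonempty ((Module.Dual R M × (Fin l → R)) ≃ₗ[R] (Fin t → R)) := by
  let ε : MvPolynomial (Fin l) A →ₐ[R] R :=
    MvPolynomial.aevalTower (h.lift (0 : (M × R) →ₗ[R] R)) (fun _ => 0)
  let D : Submodule R (MvPolynomial (Fin l) A →ₗ[R] R) :=
    { carrier := {d | (∀ x y, d (x * y) = ε x * d y + ε y * d x) ∧
        d (MvPolynomial.C (φ (0, 1))) = 0}
      add_mem' := by
        rintro a b ⟨ha, ha'⟩ ⟨hb, hb'⟩
        refine ⟨fun x y => ?_, by simp [ha', hb']⟩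
        simp only [LinearMap.add_apply, ha, hb]
        ring
      zero_mem' := by simp
      smul_mem' := by
        rintro c a ⟨ha, ha'⟩
        refine ⟨fun x y => ?_, by simp [ha']⟩
        simp only [LinearMap.smul_apply, ha, smul_eq_mul]
        ring }
  have hone : ∀ d ∈ D, d 1 = 0 := by
    intro d hd
    have := hd.1 1 1
    simpa using this
  have halg : ∀ d ∈ D, ∀ r : R, d (algebraMap R _ r) = 0 := by
    intro d hd r
    rw [Algebra.algebraMap_eq_smul_one, map_smul, hone d hd, smul_zero]
  have hBz : ∀ d ∈ D, ∀ b : B, d (algebraMap B _ b) = 0 := by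
    intro d hd b
    have hb : b ∈ Algebra.adjoin R {w} := by rw [hB]; trivial
    induction hb using Algebra.adjoin_induction with
    | mem x hx =>
      rw [Set.mem_singleton_iff] at hx
      rw [hx, IsScalarTower.algebraMap_apply B A, hw]
      exact hd.2
    | algebraMap r =>
      rw [← IsScalarTower.algebraMap_apply]
      exact halg d hd r
    | add x y _ _ hx hy => rw [map_add, map_add, hx, hy, add_zero]
    | mul x y _ _ hx hy => rw [map_mul, hd.1, hx, hy, mul_zero, mul_zero, add_zero]
  -- first restriction map
  let α : D →ₗ[R] (Module.Dual R M × (Fin l → R)) :=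
    { toFun := fun d => (d.1 ∘ₗ (IsScalarTower.toAlgHom R A (MvPolynomial (Fin l) A)).toLinearMap ∘ₗ
          φ ∘ₗ LinearMap.inl R M R, fun i => d.1 (MvPolynomial.X i))
      map_add' := fun a b => rfl
      map_smul' := fun c a => rfl }
  let β : D →ₗ[R] (Fin t → R) :=
    { toFun := fun d j => d.1 (e.symm (MvPolynomial.X j))
      map_add' := fun a b => rfl
      map_smul' := fun c a => rfl }
  have hα : Function.Bijective α := by
    constructor
    · rw [injective_iff_map_eq_zero]
      rintro ⟨d, hd⟩ h0
      have h1 : ∀ m, d (MvPolynomial.C (φ (m, 0))) = 0 := fun m =>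
        congrArg (fun q : Module.Dual R M × (Fin l → R) => q.1 m) h0
      have h2 : ∀ i, d (MvPolynomial.X i) = 0 := fun i =>
        congrArg (fun q : Module.Dual R M × (Fin l → R) => q.2 i) h0
      have h3 : ∀ a : A, d (MvPolynomial.C a) = 0 := by
        intro a
        induction a using h.induction with
        | algebraMap r => exact halg d hd r
        | ι x =>
          obtain ⟨m, s⟩ := x
          have : (m, s) = (m, 0) + s • ((0, 1) : M × R) := by simp
          have h4 : (MvPolynomial.C (s • φ (0, 1)) : MvPolynomial (Fin l) A) =
            s • MvPolynomial.C (φ (0, 1)) := map_smul (IsScalarTower.toAlgHom R A (MvPolynomial (Fin l) A)) _ _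
          rw [this, map_add, map_smul, map_add, map_add, h1, h4, map_smul, hd.2]
          simp
        | mul x y hx hy => rw [map_mul, hd.1, hx, hy, mul_zero, mul_zero, add_zero]
        | add x y hx hy => rw [map_add, map_add, hx, hy, add_zero]
      apply Subtype.ext
      change d = 0
      refine LinearMap.ext fun p => ?_
      induction p using MvPolynomial.induction_on with
      | C a => exact h3 a
      | add p q hp hq => rw [map_add, hp, hq]; simp
      | mul_X p i hp => rw [hd.1, hp, h2]; simp
    · rintro ⟨f, c⟩
      let g0 : A →ₐ[R] DualNumber R :=
        h.lift ((TrivSqZeroExt.inrHom R R) ∘ₗ f ∘ₗ LinearMap.fst R M R)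
      let g : MvPolynomial (Fin l) A →ₐ[R] DualNumber R :=
        MvPolynomial.aevalTower g0 (fun i => TrivSqZeroExt.inr (c i))
      have hg0 : (TrivSqZeroExt.fstHom R R R).comp g0 = h.lift (0 : (M × R) →ₗ[R] R) := by
        apply h.algHom_ext
        ext x <;> simp [g0]
      have hg : ∀ x, (g x).fst = ε x := by
        intro x
        induction x using MvPolynomial.induction_on with
        | C a => simpa [g, ε] using congrArg (fun f : _ →ₐ[R] _ => f a) hg0
        | add p q hp hq => simp [hp, hq]
        | mul_X p i hp => simp [g, ε]
      refine ⟨⟨(TrivSqZeroExt.sndHom R R) ∘ₗ g.toLinearMap,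
        leibniz_of_dualNumber g ε hg, ?_⟩, ?_⟩
      · simp [g, g0]
      · ext x
        · simp [α, g, g0]
        · simp [α, g]
  have hβ : Function.Bijective β := by
    constructor
    · rw [injective_iff_map_eq_zero]
      rintro ⟨d, hd⟩ h0
      have h2 : ∀ i, d (e.symm (MvPolynomial.X i)) = 0 := fun i =>
        congrArg (fun q : (Fin t → R) => q i) h0
      have h3 : ∀ q, d (e.symm q) = 0 := by
        intro q
        induction q using MvPolynomial.induction_on with
        | C b =>
          have : e.symm (MvPolynomial.C b) = algebraMap B _ b := e.symm.commutes b
          rw [this, hBz d hd]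
        | add p q hp hq => rw [map_add, map_add, hp, hq, add_zero]
        | mul_X p i hp => rw [map_mul, hd.1, hp, h2]; simp
      apply Subtype.ext
      change d = 0
      refine LinearMap.ext fun p => ?_
      rw [← e.symm_apply_apply p]
      exact h3 _
    · intro c
      let g0 : MvPolynomial (Fin t) B →ₐ[R] DualNumber R :=
        MvPolynomial.aevalTower ((TrivSqZeroExt.inlAlgHom R R R).comp
          (ε.comp (IsScalarTower.toAlgHom R B (MvPolynomial (Fin l) A))))
          (fun j => TrivSqZeroExt.inl (ε (e.symm (MvPolynomial.X j))) + TrivSqZeroExt.inr (c j))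
      let g : MvPolynomial (Fin l) A →ₐ[R] DualNumber R :=
        g0.comp (e.restrictScalars R).toAlgHom
      have hge : ∀ q, g (e.symm q) = g0 q := fun q => by
        change g0 (e (e.symm q)) = _
        rw [e.apply_symm_apply]
      have hgB : ∀ b, g (algebraMap B _ b) = TrivSqZeroExt.inl (ε (algebraMap B _ b)) := by
        intro b
        have : e.symm (MvPolynomial.C b) = algebraMap B _ b := e.symm.commutes b
        rw [← this, hge, this]
        exact MvPolynomial.aevalTower_C _ _ _
      have hg' : ∀ q, (g (e.symm q)).fst = ε (e.symm q) := by
        intro q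
        induction q using MvPolynomial.induction_on with
        | C b =>
          have : e.symm (MvPolynomial.C b) = algebraMap B _ b := e.symm.commutes b
          rw [this, hgB]
          rfl
        | add p q hp hq => simp [hp, hq]
        | mul_X p i hp =>
          rw [map_mul, map_mul, map_mul, TrivSqZeroExt.fst_mul, hp, hge]
          simp [g0]
      have hg : ∀ x, (g x).fst = ε x := by
        intro x
        rw [← e.symm_apply_apply x]
        exact hg' _
      refine ⟨⟨(TrivSqZeroExt.sndHom R R) ∘ₗ g.toLinearMap,
        leibniz_of_dualNumber g ε hg, ?_⟩, ?_⟩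
      · rw [← hw]
        have := hgB w
        rw [IsScalarTower.algebraMap_apply B A (MvPolynomial (Fin l) A)] at this
        change (g (algebraMap A (MvPolynomial (Fin l) A) (algebraMap B A w))).snd = 0
        rw [this]
        rfl
      · ext j
        change (g (e.symm (MvPolynomial.X j))).snd = c j
        rw [hge]
        simp [g0]
  exact ⟨(LinearEquiv.ofBijective α hα).symm.trans (LinearEquiv.ofBijective β hβ)⟩

lemma stablyFree_of_dual {R M : Type*} [CommRing R] [AddCommGroup M] [Module R M]
    [Module.Finite R M] [Module.Projective R M] {l t : ℕ}
    (e : (Module.Dual R M × (Fin l → R)) ≃ₗ[R] (Fin t → R)) : IsStablyFree R M := by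
  have dl : ∀ n : ℕ, (Fin n → R) ≃ₗ[R] Module.Dual R (Fin n → R) := fun n =>
    (Pi.basisFun R (Fin n)).toDualEquiv
  refine ⟨l, t, ⟨?_⟩⟩
  exact (((Module.evalEquiv R M).prodCongr (dl l)).trans
    (Module.dualProdDualEquivDual R (Module.Dual R M) (Fin l → R))).trans
    (e.symm.dualMap.trans (dl t).symm)

/-- Let `R` be a Noetherian domain, `M` a finitely generated projective `R`-module of
constant rank `r ≥ 1` which is not stably free, `A = Sym_R (M ⊕ R)` and `W ∈ A` the
degree-one element corresponding to `1 ∈ R`.  Then `A` is an `𝔸^{r+1}`-fibration over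
`R`, `W` is a residual variable of `A` over `R`, but `A` is not a stably polynomial
algebra over `R[W]`. -/
theorem symmetricAlgebra_residualVariable_not_stablyPolynomial
    (R M A : Type*) [CommRing R] [IsDomain R] [IsNoetherianRing R]
    [AddCommGroup M] [Module R M] [Module.Finite R M] [Module.Projective R M]
    (r : ℕ) (hr : 1 ≤ r)
    (hrank : ∀ (P : Ideal R) (_ : P.IsPrime),
      Module.finrank (Localization.AtPrime P) (LocalizedModule P.primeCompl M) = r)
    (hM : ¬ IsStablyFree R M)
    [CommRing A] [Algebra R A] (φ : (M × R) →ₗ[R] A)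
    (hφ : IsSymAlgebra R (M × R) A φ) (W : A) (hW : W = φ (0, 1)) :
    IsAffineFibration R A (r + 1) ∧
      IsResidualVariable R A (r + 1) 1 (fun _ => W) ∧
      ¬ ∃ ℓ : ℕ,
        Nonempty (MvPolynomial (Fin ℓ) A ≃ₐ[↥(Algebra.adjoin R {W})]
          MvPolynomial (Fin (ℓ + r)) ↥(Algebra.adjoin R {W})) := by
  have h := hφ.isSymmetricAlgebra
  subst hW
  refine ⟨⟨?_, ?_, ?_⟩, ⟨?_, ?_⟩, ?_⟩
  · obtain ⟨n, i, p, hp⟩ := symAlg_retract h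
    exact Algebra.FiniteType.of_surjective p
      (fun a => ⟨i a, congrArg (fun f : _ →ₐ[R] _ => f a) hp⟩)
  · obtain ⟨n, i, p, hp⟩ := symAlg_retract h
    have : Module.Projective R A := Module.Projective.of_split i.toLinearMap p.toLinearMap
      (LinearMap.ext fun a => congrArg (fun f : _ →ₐ[R] _ => f a) hp)
    infer_instance
  · intro P hP
    obtain ⟨b⟩ := fiber_basis P (hrank P hP)
    let K := ResidueFieldAt R P
    let b' : Module.Basis (Fin r ⊕ Unit) K (K ⊗[R] M × K) := b.prod (Module.Basis.singleton Unit K)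
    let e : K ⊗[R] (M × R) ≃ₗ[K] (K ⊗[R] M × K) := (TensorProduct.prodRight R K K M R).trans
      ((LinearEquiv.refl K _).prodCongr (TensorProduct.AlgebraTensorModule.rid R K K))
    let b2 : Module.Basis (Fin (r + 1)) K (K ⊗[R] (M × R)) :=
      (b'.map e.symm).reindex (Fintype.equivFinOfCardEq (by simp))
    exact ⟨(symAlg_baseChange h K).equiv.symm.trans (SymmetricAlgebra.equivMvPolynomial b2)⟩
  · let F : A →ₐ[R] MvPolynomial (Fin 1) R :=
      h.lift (LinearMap.toSpanSingleton R _ (MvPolynomial.X 0) ∘ₗ LinearMap.snd R M R)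
    have : F.comp (MvPolynomial.aeval (fun _ : Fin 1 => φ (0, 1))) = AlgHom.id R _ := by
      apply MvPolynomial.algHom_ext
      intro i
      fin_cases i
      simp [F]
    exact Function.LeftInverse.injective (g := F)
      fun a => congrArg (fun f : _ →ₐ[R] _ => f a) this
  · intro P hP
    obtain ⟨b⟩ := fiber_basis P (hrank P hP)
    let K := ResidueFieldAt R P
    let B := Algebra.adjoin R (Set.range (fun _ : Fin 1 => φ (0, 1)))
    let inst : Algebra (K ⊗[R] B) (K ⊗[R] A) :=
      (Algebra.TensorProduct.map (AlgHom.id R K) (IsScalarTower.toAlgHom R B A)).toRingHom.toAlgebra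
    have halg : ∀ (k : K) (x : B), algebraMap (K ⊗[R] B) (K ⊗[R] A) (k ⊗ₜ x) = k ⊗ₜ (x : A) :=
      fun k x => rfl
    have : IsScalarTower K (K ⊗[R] B) (K ⊗[R] A) :=
      IsScalarTower.of_algebraMap_eq (R := K) (S := K ⊗[R] B) (A := K ⊗[R] A)
        fun k => (halg k 1).symm
    let e : K ⊗[R] (M × R) ≃ₗ[K] (K ⊗[R] M × K) := (TensorProduct.prodRight R K K M R).trans
      ((LinearEquiv.refl K _).prodCongr (TensorProduct.AlgebraTensorModule.rid R K K))
    have he : e.symm (0, 1) = 1 ⊗ₜ (0, 1) := by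
      rw [LinearEquiv.symm_apply_eq]
      simp [e]
    let w : B := ⟨φ (0, 1), Algebra.subset_adjoin ⟨0, rfl⟩⟩
    have hw : Algebra.adjoin R {w} = ⊤ := adjoin_coe_singleton_eq_top w (Set.range_const)
    refine symAlg_equivOver (symAlg_comp_equiv (symAlg_baseChange h K) e.symm) b (1 ⊗ₜ w) ?_ ?_
    · rw [halg]
      simp [he, w]
    · simpa using Algebra.TensorProduct.adjoin_one_tmul_image_eq_top (A := K) _ hw
  · rintro ⟨ℓ, ⟨e⟩⟩
    let w : Algebra.adjoin R {φ (0, 1)} := ⟨φ (0, 1), Algebra.subset_adjoin rfl⟩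
    have hw : Algebra.adjoin R {w} = ⊤ := adjoin_coe_singleton_eq_top w rfl
    obtain ⟨e'⟩ := dual_equiv_of_stablyPolynomial h w rfl hw e
    exact hM (stablyFree_of_dual e')
end

section
/- Let R be a Noetherian commutative ring and A an 𝔸ⁿ-fibration over R. Suppose there exists an m-tuple residual variable W = (W₁,…,W_m) of A over R such that A is a stably polynomial algebra over R[W]. Then Ω_R(A) is a stably free A-module. -/
open TensorProduct

open TensorProduct in
/-- Splitting of the first fundamental sequence. -/
theorem aux_split (R S T : Type*) [CommRing R] [CommRing S] [CommRing T] [Algebra R S]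
    [Algebra R T] [Algebra S T] [IsScalarTower R S T] [Algebra.FormallySmooth S T]
    [Module.Projective T (KaehlerDifferential S T)] :
    Nonempty (KaehlerDifferential R T ≃ₗ[T]
      ((T ⊗[S] KaehlerDifferential R S) × KaehlerDifferential S T)) := by
  have hinj : Function.Injective (KaehlerDifferential.mapBaseChange R S T) := by
    rw [injective_iff_map_eq_zero]
    intro x hx
    obtain ⟨x, rfl⟩ := (Algebra.H1Cotangent.exact_δ_mapBaseChange R S T x).mp hx
    rw [Subsingleton.elim x 0, map_zero]
  have hsurj : Function.Surjective (KaehlerDifferential.map R S T T) :=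
    KaehlerDifferential.map_surjective R S T
  obtain ⟨l, hl⟩ := Module.projective_lifting_property (KaehlerDifferential.map R S T T)
    LinearMap.id hsurj
  exact ⟨((KaehlerDifferential.exact_mapBaseChange_map R S T).splitSurjectiveEquiv hinj
    ⟨l, hl⟩).1⟩

open TensorProduct in
theorem aux_free (R T : Type*) [CommRing R] [CommRing T] [Algebra R T] (k : Type*) [Fintype k]
    (e : T ≃ₐ[R] MvPolynomial k R) :
    Nonempty (KaehlerDifferential R T ≃ₗ[T] (k → T)) := by
  let _ : Algebra (MvPolynomial k R) T := e.symm.toRingHom.toAlgebra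
  have : IsScalarTower R (MvPolynomial k R) T :=
    IsScalarTower.of_algebraMap_eq fun x => (e.symm.commutes x).symm
  let e' : MvPolynomial k R ≃ₐ[MvPolynomial k R] T :=
    { e.symm.toRingEquiv with commutes' := fun _ => rfl }
  have : Algebra.FormallyEtale (MvPolynomial k R) T := Algebra.FormallyEtale.of_equiv e'
  let b := (KaehlerDifferential.mvPolynomialBasis R k).baseChange T
  exact ⟨(KaehlerDifferential.tensorKaehlerEquivOfFormallyEtale R (MvPolynomial k R) T).symm ≪≫ₗ
    b.equivFun⟩

open TensorProduct in
theorem aux_main (R A : Type*) [CommRing R] [CommRing A] [Algebra R A] (r t : ℕ)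
    (e : MvPolynomial (Fin r) A ≃ₐ[R] MvPolynomial (Fin t) R) :
    IsStablyFree A (KaehlerDifferential R A) := by
  obtain ⟨e1⟩ := aux_split R A (MvPolynomial (Fin r) A)
  obtain ⟨e2⟩ := aux_free R (MvPolynomial (Fin r) A) (Fin t) e
  let e3 := (KaehlerDifferential.mvPolynomialBasis A (Fin r)).equivFun
  let C := MvPolynomial (Fin r) A
  let _ : Algebra C A := (MvPolynomial.aeval (fun _ => (0 : A)) : C →ₐ[A] A).toRingHom.toAlgebra
  have : IsScalarTower A C A := IsScalarTower.of_algebraMap_eq fun x =>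
    ((MvPolynomial.aeval (fun _ => (0 : A)) : C →ₐ[A] A).commutes x).symm
  let f : ((C ⊗[A] KaehlerDifferential R A) × (Fin r → C)) ≃ₗ[C] (Fin t → C) :=
    (LinearEquiv.prodCongr (LinearEquiv.refl _ _) e3.symm) ≪≫ₗ e1.symm ≪≫ₗ e2
  let g := LinearEquiv.baseChange C A _ _ f
  let g1 : A ⊗[C] (C ⊗[A] KaehlerDifferential R A) ≃ₗ[A] KaehlerDifferential R A :=
    AlgebraTensorModule.cancelBaseChange A C A A (KaehlerDifferential R A) ≪≫ₗ
      TensorProduct.lid A _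
  refine ⟨r, t, ⟨(LinearEquiv.prodCongr g1.symm
    (TensorProduct.piScalarRight C A A (Fin r)).symm) ≪≫ₗ
      (TensorProduct.prodRight C A A _ _).symm ≪≫ₗ g ≪≫ₗ
      TensorProduct.piScalarRight C A A (Fin t)⟩⟩

/-- Let `R` be a Noetherian ring and `A` an `𝔸ⁿ`-fibration over `R`.  If there is an
`m`-tuple residual variable `W` of `A` over `R` such that `A` is a stably polynomial
algebra over `R[W]`, then `Ω_R(A)` is a stably free `A`-module. -/
theorem stablyFree_kaehler_of_stablyPolynomial_over_adjoin
    (R A : Type*) [CommRing R] [IsNoetherianRing R] [CommRing A] [Algebra R A]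
    (n m : ℕ) (hA : IsAffineFibration R A n)
    (W : Fin m → A) (hW : IsResidualVariable R A n m W)
    (hstab : ∃ r s : ℕ,
      Nonempty (MvPolynomial (Fin r) A ≃ₐ[↥(Algebra.adjoin R (Set.range W))]
        MvPolynomial (Fin s) ↥(Algebra.adjoin R (Set.range W)))) :
    IsStablyFree A (KaehlerDifferential R A) := by
  obtain ⟨r, s, ⟨e⟩⟩ := hstab
  have e0 : MvPolynomial (Fin m) R ≃ₐ[R] Algebra.adjoin R (Set.range W) := hW.1.aevalEquiv
  exact aux_main R A r (s + m) ((e.restrictScalars R).trans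
    ((MvPolynomial.mapAlgEquiv (Fin s) e0.symm).trans
      ((MvPolynomial.sumAlgEquiv R (Fin s) (Fin m)).symm.trans
        (MvPolynomial.renameEquiv R finSumFinEquiv))))
end
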